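/- arXiv:1908.06878 — 2 statements merged into one kernel-verified Lean document; each statement's English description precedes it below -/
import Mathlib

section
/- For 1 ≤ i ≤ N−2, the Rouquier complexes satisfy the braid relation up to homotopy: F_i ⊗_R F_{i+1} ⊗_R F_i is homotopy equivalent, as a complex of R-bimodules, to F_{i+1} ⊗_R F_i ⊗_R F_{i+1}. -/
set_option synthInstance.maxHeartbeats 1000000
set_option maxHeartbeats 1000000

/-!
STATEMENT 11: the braid relation for Rouquier complexes.  For `1 ≤ i ≤ N-2`,
the complexes of `R`-bimodules `F_i ⊗_R F_{i+1} ⊗_R F_i` and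
`F_{i+1} ⊗_R F_i ⊗_R F_{i+1}` are homotopy equivalent.

An `R`-bimodule is a module over `S = R ⊗_K R`.  Writing `s = s_i` and
`t = s_{i+1}`, the bimodules `B_s ⊗_R B_t` and `B_s ⊗_R B_t ⊗_R B_s` are
realized as `R ⊗_{R^s} (R ⊗_{R^t} R)` and `R ⊗_{R^s} (R ⊗_{R^t} (R ⊗_{R^s} R))`
via the canonical identifications `(x ⊗ y) ⊗ (z ⊗ w) ↦ x ⊗ (yz ⊗ w)` etc.,
with `S` acting through the outermost left and the innermost right factors.
(The constructions `BSg`, `BBg`, `B3g` below are stated for arbitrary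
`K`-algebras `A`, `B`, `C` mapping to `R`, and are instantiated at the
invariant subrings `R^s`, `R^t`.)  The triple tensor product complex
`F_i ⊗_R F_{i+1} ⊗_R F_i` is then realized (using the canonical unitor
identifications) as the four-term complex in degrees 3, 2, 1, 0
`B_sB_tB_s → B_sB_t × B_sB_s × B_tB_s → B_s × B_t × B_s → R`
with the Koszul-sign differentials pinned down by the formulas below, and
similarly for `F_{i+1} ⊗_R F_i ⊗_R F_{i+1}`.  The homotopy equivalence is
spelled out as a pair of chain maps together with chain homotopies in both
directions. -/

open TensorProduct MvPolynomial

noncomputable section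
variable (K : Type) [Field K] [CharZero K]
variable (R : Type) [CommRing R] [Algebra K R]

/-- The enveloping algebra `S = R ⊗_K R`; a module over it is an `R`-bimodule. -/
abbrev SEnvG := TensorProduct K R R

/-- `R` as `S`-module (the regular bimodule), via the multiplication map. -/
instance : Module (SEnvG K R) R :=
  (Algebra.TensorProduct.lmul' K (S := R)).toRingHom.toModule

variable (A : Type) [CommRing A] [Algebra K A] [Algebra A R] [IsScalarTower K A R]
variable (B : Type) [CommRing B] [Algebra K B] [Algebra B R] [IsScalarTower K B R]
variable (C : Type) [CommRing C] [Algebra K C] [Algebra C R] [IsScalarTower K C R]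
variable [SMulCommClass A B R] [SMulCommClass B A R]
variable [SMulCommClass A C R] [SMulCommClass C A R]
variable [SMulCommClass B C R] [SMulCommClass C B R]

/-- `B_A = R ⊗_A R`. -/
abbrev BSg := TensorProduct A R R

/-- The right inclusion `R → R ⊗_A R`. -/
def rIncl1 : R →ₐ[K] BSg R A :=
  Algebra.TensorProduct.includeRight.restrictScalars K

/-- The canonical map `S = R ⊗_K R → R ⊗_A R`. -/
def toBSg : SEnvG K R →ₐ[K] BSg R A :=
  Algebra.TensorProduct.productMap (R := K) (S := BSg R A)
    (Algebra.TensorProduct.includeLeft (S := K))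
    (rIncl1 K R A)

/-- `B_A` as `S`-module (`R`-bimodule). -/
instance : Module (SEnvG K R) (BSg R A) := (toBSg K R A).toRingHom.toModule

/-- `B_A ⊗_R B_B`, realized as `R ⊗_A (R ⊗_B R)`. -/
abbrev BBg := TensorProduct A R (BSg R B)

/-- The right inclusion `R ⊗_B R → R ⊗_A (R ⊗_B R)`. -/
def rIncl2 : BSg R B →ₐ[K] BBg R A B :=
  Algebra.TensorProduct.includeRight.restrictScalars K

/-- The canonical map `S = R ⊗_K R → R ⊗_A (R ⊗_B R)`. -/
def toBBg : SEnvG K R →ₐ[K] BBg R A B :=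
  Algebra.TensorProduct.productMap (R := K) (S := BBg R A B)
    (Algebra.TensorProduct.includeLeft (S := K))
    ((rIncl2 K R A B).comp (rIncl1 K R B))

/-- `B_A ⊗_R B_B` as `S`-module (`R`-bimodule). -/
instance : Module (SEnvG K R) (BBg R A B) := (toBBg K R A B).toRingHom.toModule

/-- `B_A ⊗_R B_B ⊗_R B_C`, realized as `R ⊗_A (R ⊗_B (R ⊗_C R))`. -/
abbrev B3g := TensorProduct A R (BBg R B C)

/-- The right inclusion `R ⊗_B (R ⊗_C R) → R ⊗_A (R ⊗_B (R ⊗_C R))`. -/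
def rIncl3 : BBg R B C →ₐ[K] B3g R A B C :=
  Algebra.TensorProduct.includeRight.restrictScalars K

/-- The canonical map `S = R ⊗_K R → R ⊗_A (R ⊗_B (R ⊗_C R))`. -/
def toB3g : SEnvG K R →ₐ[K] B3g R A B C :=
  Algebra.TensorProduct.productMap (R := K) (S := B3g R A B C)
    (Algebra.TensorProduct.includeLeft (S := K))
    ((rIncl3 K R A B C).comp ((rIncl2 K R B C).comp (rIncl1 K R C)))

/-- `B_A ⊗_R B_B ⊗_R B_C` as `S`-module (`R`-bimodule). -/
instance : Module (SEnvG K R) (B3g R A B C) := (toB3g K R A B C).toRingHom.toModule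

end

noncomputable section

/-- The polynomial ring `R = K[x_1, ..., x_N]`. -/
abbrev Rp (K : Type) [Field K] (N : ℕ) := MvPolynomial (Fin N) K

/-- The invariant ring `R^{s}` of the transposition `s` exchanging `x_i` and `x_j`. -/
def swapInv (K : Type) [Field K] (N : ℕ) (i j : Fin N) : Subalgebra K (Rp K N) where
  carrier := {f | rename (⇑(Equiv.swap i j)) f = f}
  mul_mem' := by
    intro a b ha hb
    simp only [Set.mem_setOf_eq, map_mul] at *
    rw [ha, hb]
  one_mem' := by simp only [Set.mem_setOf_eq, map_one]
  add_mem' := by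
    intro a b ha hb
    simp only [Set.mem_setOf_eq, map_add] at *
    rw [ha, hb]
  zero_mem' := by simp only [Set.mem_setOf_eq, map_zero]
  algebraMap_mem' := by
    intro c
    simp [Set.mem_setOf_eq, MvPolynomial.algebraMap_eq]

variable (K : Type) [Field K] [CharZero K] (N : ℕ)

/-- The enveloping algebra `S = R ⊗_K R` for `R = K[x_1, ..., x_N]`. -/
abbrev SE := SEnvG K (Rp K N)

/-- The Soergel bimodule `B_i = R ⊗_{R^{s_i}} R` (where `s_i` swaps `x_i, x_j`). -/
abbrev Bq (i j : Fin N) := BSg (Rp K N) ↥(swapInv K N i j)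

/-- The bimodule `B_s ⊗_R B_t`. -/
abbrev Bq2 (i₁ j₁ i₂ j₂ : Fin N) :=
  BBg (Rp K N) ↥(swapInv K N i₁ j₁) ↥(swapInv K N i₂ j₂)

/-- The bimodule `B_s ⊗_R B_t ⊗_R B_u`. -/
abbrev Bq3 (i₁ j₁ i₂ j₂ i₃ j₃ : Fin N) :=
  B3g (Rp K N) ↥(swapInv K N i₁ j₁) ↥(swapInv K N i₂ j₂) ↥(swapInv K N i₃ j₃)

end

/-!
Write `s = s_i`, `t = s_{i+1}`. Restricting the factors `R` to graphs of `1`, `s`, `t` embeds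
`B_s B_t B_s` into a product of copies of `R`, one for each subword of `sts`, so an element of
`R ⊗ R` kills the generator `1` iff it vanishes on the graphs of all these subwords. The subwords
of `sts` and of `tst` give the same group elements; hence `1 ↦ 1` defines bimodule maps between
the submodules of `B_s B_t B_s` and `B_t B_s B_t` generated by `1`. These submodules are direct
summands with complements generated by one element, isomorphic to `B_s` and `B_t` respectively,
and each complement is contracted against the middle term `B_s B_s`, resp. `B_t B_t`, in degree 2.
-/

namespace Rouquier

noncomputable section

open scoped Pointwise

section ExistsLinearMap

variable {S M M' : Type*} [Ring S] [AddCommGroup M] [Module S M] [AddCommGroup M'] [Module S M']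

theorem exists_linearMap_comp_eq_of_ker_le {P : Type*} [AddCommGroup P] [Module S P]
    {φ : P →ₗ[S] M} (hφ : Function.Surjective φ) {ψ : P →ₗ[S] M'}
    (h : LinearMap.ker φ ≤ LinearMap.ker ψ) : ∃ f : M →ₗ[S] M', f ∘ₗ φ = ψ := by
  refine ⟨(Submodule.liftQ _ ψ h) ∘ₗ (φ.quotKerEquivOfSurjective hφ).symm.toLinearMap,
    LinearMap.ext fun p ↦ ?_⟩
  have hp : (φ.quotKerEquivOfSurjective hφ).symm (φ p) = Submodule.Quotient.mk p :=
    (LinearEquiv.symm_apply_eq _).2 rfl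
  simp only [LinearMap.comp_apply, LinearEquiv.coe_coe, hp, Submodule.liftQ_apply]

theorem exists_linearMap_of_span_singleton {g : M} {m : M'} (hg : Submodule.span S {g} = ⊤)
    (h : ∀ p : S, p • g = 0 → p • m = 0) : ∃ f : M →ₗ[S] M', f g = m := by
  have hsurj : Function.Surjective (LinearMap.toSpanSingleton S M g) :=
    LinearMap.range_eq_top.1 (by rw [LinearMap.range_toSpanSingleton, hg])
  obtain ⟨f, hf⟩ :=
    exists_linearMap_comp_eq_of_ker_le hsurj (ψ := LinearMap.toSpanSingleton S M' m) h
  exact ⟨f, by simpa using LinearMap.congr_fun hf 1⟩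

theorem exists_linearMap_of_span_pair {g g' : M} {m m' : M'}
    (hg : Submodule.span S {g, g'} = ⊤)
    (h : ∀ p q : S, p • g + q • g' = 0 → p • m + q • m' = 0) :
    ∃ f : M →ₗ[S] M', f g = m ∧ f g' = m' := by
  let φ := (LinearMap.toSpanSingleton S M g).coprod (LinearMap.toSpanSingleton S M g')
  let ψ := (LinearMap.toSpanSingleton S M' m).coprod (LinearMap.toSpanSingleton S M' m')
  have hsurj : Function.Surjective φ := fun a ↦ by
    obtain ⟨p, q, rfl⟩ := Submodule.mem_span_pair.1 (hg ▸ Submodule.mem_top : a ∈ _)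
    exact ⟨(p, q), rfl⟩
  obtain ⟨f, hf⟩ := exists_linearMap_comp_eq_of_ker_le hsurj (ψ := ψ) fun c hc ↦ h c.1 c.2 hc
  exact ⟨f, by simpa [φ, ψ] using LinearMap.congr_fun hf (1, 0),
    by simpa [φ, ψ] using LinearMap.congr_fun hf (0, 1)⟩

end ExistsLinearMap

/-- `s` is a reflection of the `K`-algebra `R` with fixed ring `A` and root `x - s x`: an
involution whose divided difference `f ↦ (f - s f) / (x - s x)` is defined on all of `R`. -/
structure IsReflection {K R : Type*} [CommSemiring K] [CommRing R] [Algebra K R]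
    (A : Type*) [CommRing A] [Algebra A R] (s : R →ₐ[K] R) (x : R) : Prop where
  involutive : Function.Involutive s
  apply_eq_self_iff : ∀ f, s f = f ↔ f ∈ Set.range (algebraMap A R)
  apply_ne : s x ≠ x
  sub_dvd_sub : ∀ f, x - s x ∣ f - s f

namespace IsReflection

variable {K R A : Type*} [CommSemiring K] [CommRing R] [Algebra K R] [CommRing A] [Algebra A R]
variable {s : R →ₐ[K] R} {x : R}

theorem injective (hs : IsReflection A s x) : Function.Injective s := hs.involutive.injective

theorem mul_self (hs : IsReflection A s x) : s * s = 1 := AlgHom.ext hs.involutive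

theorem apply_algebraMap (hs : IsReflection A s x) (a : A) :
    s (algebraMap A R a) = algebraMap A R a :=
  (hs.apply_eq_self_iff _).2 ⟨a, rfl⟩

theorem apply (hs : IsReflection A s x) : IsReflection A s (s x) where
  involutive := hs.involutive
  apply_eq_self_iff := hs.apply_eq_self_iff
  apply_ne := by rw [hs.involutive]; exact hs.apply_ne.symm
  sub_dvd_sub f := by rw [hs.involutive, ← neg_sub, neg_dvd]; exact hs.sub_dvd_sub f

/-- A reflection, as an algebra map over its fixed ring. -/
def toAlgHom (hs : IsReflection A s x) : R →ₐ[A] R where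
  toRingHom := s
  commutes' := hs.apply_algebraMap

@[simp]
theorem toAlgHom_apply (hs : IsReflection A s x) (f : R) : hs.toAlgHom f = s f := rfl

theorem exists_eq_add_mul [IsDomain R] (hs : IsReflection A s x) (f : R) :
    ∃ a b : A, f = algebraMap A R a + x * algebraMap A R b := by
  obtain ⟨g, hg⟩ := hs.sub_dvd_sub f
  have hsg : s f - f = (s x - x) * s g := by
    simpa [hs.involutive f, hs.involutive x] using congrArg s hg
  have hg_fixed : s g = g :=
    mul_left_cancel₀ (sub_ne_zero.2 hs.apply_ne) (by linear_combination -hsg - hg)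
  obtain ⟨b, hb⟩ := (hs.apply_eq_self_iff g).1 hg_fixed
  obtain ⟨a, ha⟩ := (hs.apply_eq_self_iff (f - x * g)).1 (by
    rw [map_sub, map_mul, hg_fixed]
    linear_combination -hg)
  exact ⟨a, b, by rw [ha, hb]; ring⟩

theorem exists_eq_one_tmul_add_tmul [IsDomain R] {N : Type*} [AddCommGroup N] [Module A N]
    (hs : IsReflection A s x) (m : R ⊗[A] N) :
    ∃ n n' : N, m = 1 ⊗ₜ n + x ⊗ₜ n' := by
  induction m with
  | zero => exact ⟨0, 0, by simp⟩
  | add m m' hm hm' =>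
    obtain ⟨n, n', rfl⟩ := hm
    obtain ⟨k, k', rfl⟩ := hm'
    exact ⟨n + k, n' + k', by simp only [tmul_add]; abel⟩
  | tmul f n =>
    obtain ⟨a, b, rfl⟩ := hs.exists_eq_add_mul f
    refine ⟨a • n, b • n, ?_⟩
    simp only [add_tmul, ← smul_tmul, ← Algebra.algebraMap_eq_smul_one, ← Algebra.commutes,
      ← Algebra.smul_def]

end IsReflection

section TwistedMul

variable {A R N : Type*} [CommRing A] [CommRing R] [CommRing N]
variable [Algebra A R] [Algebra A N] [Algebra R N] [IsScalarTower A R N]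

/-- Restriction of `R ⊗[A] N` to the graph of `σ`: multiplication twisted by `σ`. -/
def twistedMul (N : Type*) [CommRing N] [Algebra A N] [Algebra R N] [IsScalarTower A R N]
    (σ : R →ₐ[A] R) : R ⊗[A] N →ₐ[A] N :=
  Algebra.TensorProduct.productMap ((IsScalarTower.toAlgHom A R N).comp σ) (AlgHom.id A N)

@[simp]
theorem twistedMul_tmul (σ : R →ₐ[A] R) (f : R) (n : N) :
    twistedMul N σ (f ⊗ₜ n) = σ f • n := by
  simp [twistedMul, Algebra.smul_def]

theorem twistedMul_smul (σ : R →ₐ[A] R) (f : R) (m : R ⊗[A] N) :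
    twistedMul N σ (f • m) = σ f • twistedMul N σ m := by
  induction m with
  | zero => simp
  | add m m' hm hm' => simp only [smul_add, map_add, hm, hm']
  | tmul g n => simp [smul_tmul', mul_smul]

variable {K : Type*} [CommSemiring K] [Algebra K R] [IsDomain R] {s : R →ₐ[K] R} {x : R}

-- The Vandermonde determinant of `(1, x)` and `(1, s x)` is `s x - x ≠ 0`.
theorem IsReflection.eq_zero_iff_twistedMul [Module.IsTorsionFree R N]
    (hs : IsReflection A s x) (m : R ⊗[A] N) :
    m = 0 ↔ twistedMul N (AlgHom.id A R) m = 0 ∧ twistedMul N hs.toAlgHom m = 0 := by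
  refine ⟨by rintro rfl; simp, fun ⟨hid, hrefl⟩ ↦ ?_⟩
  obtain ⟨n, n', rfl⟩ := hs.exists_eq_one_tmul_add_tmul m
  simp only [map_add, twistedMul_tmul, AlgHom.id_apply, map_one, one_smul, toAlgHom_apply]
    at hid hrefl
  have hn' : (s x - x) • n' = 0 := by
    rw [sub_smul, sub_eq_zero]
    exact add_left_cancel (hrefl.trans hid.symm)
  obtain rfl := (smul_eq_zero_iff_right (sub_ne_zero.2 hs.apply_ne)).1 hn'
  obtain rfl : n = 0 := by simpa using hid
  simp

theorem IsReflection.isTorsionFree_tensorProduct [Module.IsTorsionFree R N]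
    (hs : IsReflection A s x) : Module.IsTorsionFree R (R ⊗[A] N) := by
  refine .of_smul_eq_zero fun f m hfm ↦ or_iff_not_imp_left.2 fun hf ↦ ?_
  have hsf : s f ≠ 0 := (map_ne_zero_iff s hs.injective).2 hf
  obtain ⟨hid, hrefl⟩ := (hs.eq_zero_iff_twistedMul _).1 hfm
  rw [twistedMul_smul] at hid hrefl
  exact (hs.eq_zero_iff_twistedMul m).2
    ⟨(smul_eq_zero_iff_right hf).1 hid, (smul_eq_zero_iff_right hsf).1 hrefl⟩

end TwistedMul

theorem pair_mul_pair_mul_pair_subset {M : Type*} [Monoid M] {s t : M} (hs : s * s = 1)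
    (hst : s * t * s = t * s * t) :
    ({1, s} * {1, t} * {1, s} : Set M) ⊆ {1, t} * {1, s} * {1, t} := by
  simp [Set.subset_def, Set.mem_mul, or_and_right, or_imp, exists_or, forall_and, hs, hst]

/-- Reflections `s` and `t` with fixed rings `A` and `B` that exchange `x₁, x₂` and `x₂, x₃`
respectively and satisfy the braid relation, modelled on the transpositions `(1 2)`, `(2 3)`. -/
structure IsBraidPair {K R : Type*} [CommSemiring K] [CommRing R] [Algebra K R]
    (A B : Type*) [CommRing A] [Algebra A R] [CommRing B] [Algebra B R]
    (s t : R →ₐ[K] R) (x₁ x₂ x₃ : R) : Prop where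
  reflection_left : IsReflection A s x₁
  reflection_right : IsReflection B t x₃
  left_apply₁ : s x₁ = x₂
  left_apply₃ : s x₃ = x₃
  right_apply₁ : t x₁ = x₁
  right_apply₃ : t x₃ = x₂
  braid : s * t * s = t * s * t

namespace IsBraidPair

variable {K R A B : Type*} [CommSemiring K] [CommRing R] [Algebra K R]
variable [CommRing A] [Algebra A R] [CommRing B] [Algebra B R]
variable {s t : R →ₐ[K] R} {x₁ x₂ x₃ : R}

theorem swap (h : IsBraidPair A B s t x₁ x₂ x₃) : IsBraidPair B A t s x₃ x₂ x₁ where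
  reflection_left := h.reflection_right
  reflection_right := h.reflection_left
  left_apply₁ := h.right_apply₃
  left_apply₃ := h.right_apply₁
  right_apply₁ := h.left_apply₃
  right_apply₃ := h.left_apply₁
  braid := h.braid.symm

theorem left_apply₂ (h : IsBraidPair A B s t x₁ x₂ x₃) : s x₂ = x₁ := by
  rw [← h.left_apply₁, h.reflection_left.involutive]

theorem right_apply₂ (h : IsBraidPair A B s t x₁ x₂ x₃) : t x₂ = x₃ := h.swap.left_apply₂

theorem mem_range_left (h : IsBraidPair A B s t x₁ x₂ x₃) : x₃ ∈ Set.range (algebraMap A R) :=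
  (h.reflection_left.apply_eq_self_iff x₃).1 h.left_apply₃

theorem mem_range_right (h : IsBraidPair A B s t x₁ x₂ x₃) : x₁ ∈ Set.range (algebraMap B R) :=
  h.swap.mem_range_left

end IsBraidPair

section Graph

variable {K R : Type} [Field K] [CommRing R] [Algebra K R]

/-- Restriction of `R ⊗[K] R` to the graph of `w`; with `R` the functions on a space `V`, this is
restriction of functions from `V × V`. -/
def graphEval (w : R →ₐ[K] R) : SEnvG K R →ₐ[K] R :=
  Algebra.TensorProduct.productMap w (AlgHom.id K R)

@[simp]
theorem graphEval_tmul (w : R →ₐ[K] R) (f g : R) : graphEval w (f ⊗ₜ g) = w f * g := rfl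

/-- The action of an endomorphism of `R` on the left factor of `R ⊗[K] R`. -/
def leftTwist (σ : R →ₐ[K] R) : SEnvG K R →ₐ[K] SEnvG K R :=
  Algebra.TensorProduct.map σ (AlgHom.id K R)

@[simp]
theorem leftTwist_tmul (σ : R →ₐ[K] R) (f g : R) : leftTwist σ (f ⊗ₜ g) = σ f ⊗ₜ g := rfl

@[simp]
theorem leftTwist_one (p : SEnvG K R) : leftTwist 1 p = p :=
  congrArg (fun φ : SEnvG K R →ₐ[K] SEnvG K R ↦ φ p) Algebra.TensorProduct.map_id

theorem graphEval_leftTwist (w σ : R →ₐ[K] R) (p : SEnvG K R) :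
    graphEval w (leftTwist σ p) = graphEval (w * σ) p := by
  have h : (graphEval w).comp (leftTwist σ) = graphEval (w * σ) := by
    ext <;> simp
  exact DFunLike.congr_fun h p

theorem smul_one_eq_graphEval_one (p : SEnvG K R) : p • (1 : R) = graphEval 1 p :=
  mul_one _

/-- `f ⊗ 1`, acting on bimodules as left multiplication by `f`. -/
def leftScalar (K : Type) [Field K] {R : Type} [CommRing R] [Algebra K R] (f : R) : SEnvG K R :=
  f ⊗ₜ 1

/-- `1 ⊗ f`, acting on bimodules as right multiplication by `f`. -/
def rightScalar (K : Type) [Field K] {R : Type} [CommRing R] [Algebra K R] (f : R) : SEnvG K R :=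
  1 ⊗ₜ f

@[simp]
theorem graphEval_leftScalar (w : R →ₐ[K] R) (f : R) : graphEval w (leftScalar K f) = w f := by
  simp [leftScalar]

@[simp]
theorem graphEval_rightScalar (w : R →ₐ[K] R) (f : R) : graphEval w (rightScalar K f) = f := by
  simp [rightScalar]

@[simp]
theorem leftTwist_leftScalar (σ : R →ₐ[K] R) (f : R) :
    leftTwist σ (leftScalar K f) = leftScalar K (σ f) := rfl

@[simp]
theorem leftTwist_rightScalar (σ : R →ₐ[K] R) (f : R) :
    leftTwist σ (rightScalar K f) = rightScalar K f := by
  simp [rightScalar]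

/-- The ideal of `R ⊗[K] R` of functions vanishing on the graphs of all `w ∈ W`. -/
def graphIdeal (W : Set (R →ₐ[K] R)) : Ideal (SEnvG K R) :=
  ⨅ w ∈ W, RingHom.ker (graphEval w)

theorem mem_graphIdeal {W : Set (R →ₐ[K] R)} {p : SEnvG K R} :
    p ∈ graphIdeal W ↔ ∀ w ∈ W, graphEval w p = 0 := by
  simp only [graphIdeal, Ideal.mem_iInf, RingHom.mem_ker]

theorem graphIdeal_anti {W W' : Set (R →ₐ[K] R)} (h : W ⊆ W') :
    graphIdeal W' ≤ graphIdeal W :=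
  biInf_mono h

theorem mem_graphIdeal_pair {v w : R →ₐ[K] R} {p : SEnvG K R} :
    p ∈ graphIdeal {v, w} ↔ graphEval v p = 0 ∧ graphEval w p = 0 := by
  simp [mem_graphIdeal]

theorem mem_graphIdeal_mul_pair {W : Set (R →ₐ[K] R)} {σ : R →ₐ[K] R} {p : SEnvG K R} :
    p ∈ graphIdeal (W * {1, σ}) ↔ p ∈ graphIdeal W ∧ leftTwist σ p ∈ graphIdeal W := by
  simp only [mem_graphIdeal, ← Set.image2_mul, Set.forall_mem_image2, Set.forall_mem_insert,
    Set.mem_singleton_iff, forall_eq, mul_one, forall_and, graphEval_leftTwist]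

variable {A B : Type} [CommRing A] [Algebra A R] [CommRing B] [Algebra B R]
variable {s t : R →ₐ[K] R} {x x₁ x₂ x₃ : R} {p q : SEnvG K R}

theorem IsReflection.leftTwist_mem_graphIdeal (hs : IsReflection A s x)
    (hq : q ∈ graphIdeal {1, s}) : leftTwist s q ∈ graphIdeal {1, s} := by
  simpa only [mem_graphIdeal_pair, graphEval_leftTwist, one_mul, hs.mul_self] using
    (mem_graphIdeal_pair.1 hq).symm

-- On each graph the two hypotheses differ by `±(x - s x)` times the value of `q`.
theorem IsReflection.mem_graphIdeal_of_add_mul_mem [IsDomain R] (hs : IsReflection A s x)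
    (h : p + q * leftScalar K x ∈ graphIdeal {1, s})
    (hσ : leftTwist s p + leftTwist s q * leftScalar K x ∈ graphIdeal {1, s}) :
    q ∈ graphIdeal {1, s} := by
  simp only [mem_graphIdeal_pair, map_add, map_mul, graphEval_leftTwist, one_mul, hs.mul_self,
    graphEval_leftScalar, AlgHom.one_apply] at h hσ
  have hx : x - s x ≠ 0 := sub_ne_zero.2 hs.apply_ne.symm
  exact mem_graphIdeal_pair.2
    ⟨mul_left_cancel₀ hx (by linear_combination h.1 - hσ.2),
      mul_left_cancel₀ hx (by linear_combination hσ.1 - h.2)⟩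

namespace IsBraidPair

theorem mul_rightScalar_sub_leftScalar_mem (h : IsBraidPair A B s t x₁ x₂ x₃)
    (hq : q ∈ graphIdeal {1, s}) :
    q * (rightScalar K x₃ - leftScalar K x₂) ∈ graphIdeal ({1, s} * {1, t}) := by
  refine mem_graphIdeal_mul_pair.2 ⟨Ideal.mul_mem_right _ _ hq, ?_⟩
  rw [map_mul]
  refine Ideal.mul_mem_left _ _ (mem_graphIdeal_pair.2 ?_)
  simp [h.right_apply₂, h.left_apply₃]

theorem mul_rightScalar_add_sub_leftScalar_mem (h : IsBraidPair A B s t x₁ x₂ x₃)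
    (hq : q ∈ graphIdeal {1, s}) :
    q * (rightScalar K x₁ + rightScalar K x₃ - leftScalar K x₁ - leftScalar K x₂) ∈
      graphIdeal ({1, t} * {1, s}) := by
  obtain ⟨hq_one, hq_s⟩ := mem_graphIdeal_pair.1 hq
  refine mem_graphIdeal_mul_pair.2 ⟨mem_graphIdeal_pair.2 ?_, mem_graphIdeal_pair.2 ?_⟩ <;>
  simp [graphEval_leftTwist, hq_one, hq_s, h.left_apply₁, h.left_apply₂, h.right_apply₁,
    h.right_apply₂]

end IsBraidPair

end Graph

section Bimodule

variable {K R : Type} [Field K] [CommRing R] [Algebra K R]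
variable {A : Type} [CommRing A] [Algebra K A] [Algebra A R] [IsScalarTower K A R]
variable {B : Type} [CommRing B] [Algebra K B] [Algebra B R] [IsScalarTower K B R]
variable {C : Type} [CommRing C] [Algebra K C] [Algebra C R] [IsScalarTower K C R]

theorem tmul_smul_tmul (f g x y : R) :
    (f ⊗ₜ[K] g : SEnvG K R) • (x ⊗ₜ y : BSg R A) = (f * x) ⊗ₜ (g * y) := by
  change toBSg K R A _ * _ = _
  simp [toBSg, rIncl1]

theorem span_one_BSg : Submodule.span (SEnvG K R) {(1 : BSg R A)} = ⊤ := by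
  refine Submodule.eq_top_iff'.2 fun m ↦ Submodule.mem_span_singleton.2 ?_
  induction m using TensorProduct.induction_on with
  | zero => exact ⟨0, zero_smul _ _⟩
  | add m n hm hn =>
    obtain ⟨p, rfl⟩ := hm
    obtain ⟨q, rfl⟩ := hn
    exact ⟨p + q, add_smul _ _ _⟩
  | tmul f g => exact ⟨f ⊗ₜ g, by simp [Algebra.TensorProduct.one_def, tmul_smul_tmul]⟩

theorem hom_ext_one {M : Type*} [AddCommGroup M] [Module (SEnvG K R) M]
    {f g : BSg R A × BSg R B × BSg R C →ₗ[SEnvG K R] M}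
    (h_fst : f (1, 0, 0) = g (1, 0, 0)) (h_snd : f (0, 1, 0) = g (0, 1, 0))
    (h_thd : f (0, 0, 1) = g (0, 0, 1)) : f = g := by
  refine LinearMap.prod_ext ?_ (LinearMap.prod_ext ?_ ?_) <;>
  refine LinearMap.ext_on span_one_BSg (by simpa)

variable [SMulCommClass B A R] [SMulCommClass C B R]

theorem tmul_smul_tmul_tmul (f g x y z : R) :
    (f ⊗ₜ[K] g : SEnvG K R) • (x ⊗ₜ (y ⊗ₜ z) : BBg R A B) = (f * x) ⊗ₜ (y ⊗ₜ (g * z)) := by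
  change toBBg K R A B _ * _ = _
  simp [toBBg, rIncl1, rIncl2]

theorem tmul_smul_tmul_tmul_tmul (f g x y z w : R) :
    (f ⊗ₜ[K] g : SEnvG K R) • (x ⊗ₜ (y ⊗ₜ (z ⊗ₜ w)) : B3g R A B C) =
      (f * x) ⊗ₜ (y ⊗ₜ (z ⊗ₜ (g * w))) := by
  change toB3g K R A B C _ * _ = _
  simp [toB3g, rIncl1, rIncl2, rIncl3]

theorem twistedMul_smul_BSg (σ : R →ₐ[A] R) (p : SEnvG K R) (m : BSg R A) :
    twistedMul R σ (p • m) = leftTwist (σ.restrictScalars K) p • twistedMul R σ m := by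
  have h : ((twistedMul R σ).restrictScalars K).comp (toBSg K R A) =
      (Algebra.TensorProduct.lmul' K).comp (leftTwist (σ.restrictScalars K)) := by
    ext <;> simp [toBSg, rIncl1]
  exact (map_mul _ _ _).trans (congrArg (· * _) (DFunLike.congr_fun h p))

theorem twistedMul_smul_BBg (σ : R →ₐ[A] R) (p : SEnvG K R) (m : BBg R A B) :
    twistedMul (BSg R B) σ (p • m) =
      leftTwist (σ.restrictScalars K) p • twistedMul (BSg R B) σ m := by
  have h : ((twistedMul (BSg R B) σ).restrictScalars K).comp (toBBg K R A B) =
      (toBSg K R B).comp (leftTwist (σ.restrictScalars K)) := by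
    ext <;> simp [toBBg, toBSg, rIncl1, rIncl2, Algebra.TensorProduct.one_def, smul_tmul']
  exact (map_mul _ _ _).trans (congrArg (· * _) (DFunLike.congr_fun h p))

theorem twistedMul_smul_B3g (σ : R →ₐ[A] R) (p : SEnvG K R) (m : B3g R A B C) :
    twistedMul (BBg R B C) σ (p • m) =
      leftTwist (σ.restrictScalars K) p • twistedMul (BBg R B C) σ m := by
  have h : ((twistedMul (BBg R B C) σ).restrictScalars K).comp (toB3g K R A B C) =
      (toBBg K R B C).comp (leftTwist (σ.restrictScalars K)) := by
    ext <;> simp [toB3g, toBBg, rIncl1, rIncl2, rIncl3, Algebra.TensorProduct.one_def, smul_tmul']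
  exact (map_mul _ _ _).trans (congrArg (· * _) (DFunLike.congr_fun h p))

section Annihilator

variable {s t u : R →ₐ[K] R} {x y z : R}

theorem restrictScalars_id : (AlgHom.id A R).restrictScalars K = 1 := rfl

namespace IsReflection

theorem restrictScalars_toAlgHom (hs : IsReflection A s x) :
    hs.toAlgHom.restrictScalars K = s := rfl

variable [IsDomain R]

theorem smul_one_BSg_eq_zero_iff (hs : IsReflection A s x) {p : SEnvG K R} :
    p • (1 : BSg R A) = 0 ↔ p ∈ graphIdeal {1, s} := by
  rw [hs.eq_zero_iff_twistedMul, mem_graphIdeal_pair]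
  simp only [twistedMul_smul_BSg, map_one, smul_one_eq_graphEval_one, graphEval_leftTwist]
  rfl

theorem smul_BBg_eq_zero_iff (hs : IsReflection A s x) (ht : IsReflection B t y)
    {p : SEnvG K R} {m : BBg R A B} : p • m = 0 ↔
      p • twistedMul (BSg R B) (AlgHom.id A R) m = 0 ∧
        leftTwist s p • twistedMul (BSg R B) hs.toAlgHom m = 0 := by
  have := ht.isTorsionFree_tensorProduct (N := R)
  rw [hs.eq_zero_iff_twistedMul, twistedMul_smul_BBg, twistedMul_smul_BBg, restrictScalars_id,
    hs.restrictScalars_toAlgHom, leftTwist_one]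

theorem smul_one_BBg_eq_zero_iff (hs : IsReflection A s x) (ht : IsReflection B t y)
    {p : SEnvG K R} : p • (1 : BBg R A B) = 0 ↔ p ∈ graphIdeal ({1, t} * {1, s}) := by
  rw [hs.smul_BBg_eq_zero_iff ht, map_one, map_one, ht.smul_one_BSg_eq_zero_iff,
    ht.smul_one_BSg_eq_zero_iff, mem_graphIdeal_mul_pair]

theorem smul_B3g_eq_zero_iff (hs : IsReflection A s x) (ht : IsReflection B t y)
    (hu : IsReflection C u z) {p : SEnvG K R} {m : B3g R A B C} : p • m = 0 ↔
      p • twistedMul (BBg R B C) (AlgHom.id A R) m = 0 ∧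
        leftTwist s p • twistedMul (BBg R B C) hs.toAlgHom m = 0 := by
  have := hu.isTorsionFree_tensorProduct (N := R)
  have := ht.isTorsionFree_tensorProduct (N := BSg R C)
  rw [hs.eq_zero_iff_twistedMul, twistedMul_smul_B3g, twistedMul_smul_B3g, restrictScalars_id,
    hs.restrictScalars_toAlgHom, leftTwist_one]

theorem smul_one_B3g_eq_zero_iff (hs : IsReflection A s x) (ht : IsReflection B t y)
    (hu : IsReflection C u z) {p : SEnvG K R} :
    p • (1 : B3g R A B C) = 0 ↔ p ∈ graphIdeal ({1, u} * {1, t} * {1, s}) := by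
  rw [hs.smul_B3g_eq_zero_iff ht hu, map_one, map_one, ht.smul_one_BBg_eq_zero_iff hu,
    ht.smul_one_BBg_eq_zero_iff hu, ← mem_graphIdeal_mul_pair]

end IsReflection

end Annihilator

section Generators

/-- The element `1 ⊗ f ⊗ 1` of `B_A B_B`. If `f` is the root variable of a reflection with fixed
ring `B`, it generates `B_A B_B` together with `1`. -/
def middle (A B : Type) {R : Type} [CommRing R] [CommRing A] [Algebra A R] [CommRing B]
    [Algebra B R] [SMulCommClass B A R] (f : R) : BBg R A B :=
  1 ⊗ₜ (f ⊗ₜ 1)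

/-- The element `1 ⊗ 1 ⊗ f ⊗ 1` of `B_A B_B B_C`, used as a generator of this bimodule next
to `1`. -/
def third (A B C : Type) {R : Type} [CommRing R] [CommRing A] [Algebra A R] [CommRing B]
    [Algebra B R] [CommRing C] [Algebra C R] [SMulCommClass B A R] [SMulCommClass C B R] (f : R) :
    B3g R A B C :=
  1 ⊗ₜ (1 ⊗ₜ (f ⊗ₜ 1))

theorem leftScalar_smul_one_BSg (f : R) : leftScalar K f • (1 : BSg R A) = f ⊗ₜ 1 := by
  simp [leftScalar, Algebra.TensorProduct.one_def, tmul_smul_tmul]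

theorem leftScalar_algebraMap_smul_one_BSg (a : A) :
    leftScalar K (algebraMap A R a) • (1 : BSg R A) =
      rightScalar K (algebraMap A R a) • (1 : BSg R A) := by
  simp only [leftScalar, rightScalar, Algebra.TensorProduct.one_def, tmul_smul_tmul, mul_one,
    Algebra.algebraMap_eq_smul_one, smul_tmul]

theorem middle_eq_leftScalar_smul_one {f : R} (hf : f ∈ Set.range (algebraMap A R)) :
    middle A B f = leftScalar K f • (1 : BBg R A B) := by
  obtain ⟨a, rfl⟩ := hf
  simp only [middle, leftScalar, Algebra.TensorProduct.one_def, tmul_smul_tmul_tmul, mul_one,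
    Algebra.algebraMap_eq_smul_one, smul_tmul]
  rfl

theorem eq_top_of_forall_tmul_mem_BBg {P : Submodule (SEnvG K R) (BBg R A B)}
    (h : ∀ f : R, 1 ⊗ₜ (f ⊗ₜ 1) ∈ P) : P = ⊤ := by
  refine Submodule.eq_top_iff'.2 fun m ↦ ?_
  induction m using TensorProduct.induction_on with
  | zero => exact zero_mem _
  | add m n hm hn => exact add_mem hm hn
  | tmul f m =>
    induction m using TensorProduct.induction_on with
    | zero => simp
    | add m n hm hn => rw [tmul_add]; exact add_mem hm hn
    | tmul g k =>
      have := P.smul_mem (f ⊗ₜ k) (h g)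
      simpa [tmul_smul_tmul_tmul] using this

theorem eq_top_of_forall_tmul_mem_B3g {P : Submodule (SEnvG K R) (B3g R A B C)}
    (h : ∀ f g : R, 1 ⊗ₜ (f ⊗ₜ (g ⊗ₜ 1)) ∈ P) : P = ⊤ := by
  refine Submodule.eq_top_iff'.2 fun m ↦ ?_
  induction m using TensorProduct.induction_on with
  | zero => exact zero_mem _
  | add m n hm hn => exact add_mem hm hn
  | tmul f m =>
    induction m using TensorProduct.induction_on with
    | zero => simp
    | add m n hm hn => rw [tmul_add]; exact add_mem hm hn
    | tmul g m =>
      induction m using TensorProduct.induction_on with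
      | zero => simp
      | add m n hm hn => rw [tmul_add, tmul_add]; exact add_mem hm hn
      | tmul k l =>
        have := P.smul_mem (f ⊗ₜ l) (h g k)
        simpa [tmul_smul_tmul_tmul_tmul] using this

theorem one_tmul_algebraMap_tmul {N : Type*} [AddCommGroup N] [Module B N] (a : A) (n : N) :
    (1 : R) ⊗ₜ[A] (algebraMap A R a ⊗ₜ[B] n) = algebraMap A R a ⊗ₜ (1 ⊗ₜ n) := by
  simp only [Algebra.algebraMap_eq_smul_one, ← smul_tmul', ← smul_tmul]

theorem span_one_BBg [IsDomain R] {t : R →ₐ[K] R} {x : R} (ht : IsReflection B t x)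
    (hx : x ∈ Set.range (algebraMap A R)) :
    Submodule.span (SEnvG K R) {(1 : BBg R A B)} = ⊤ := by
  refine eq_top_of_forall_tmul_mem_BBg fun f ↦ Submodule.mem_span_singleton.2 ?_
  obtain ⟨a, rfl⟩ := hx
  obtain ⟨g, g', hf⟩ := ht.exists_eq_one_tmul_add_tmul (f ⊗ₜ (1 : R))
  refine ⟨1 ⊗ₜ g + algebraMap A R a ⊗ₜ g', ?_⟩
  rw [hf, tmul_add, one_tmul_algebraMap_tmul]
  simp [Algebra.TensorProduct.one_def, add_smul, tmul_smul_tmul_tmul]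

theorem span_one_middle_BBg [IsDomain R] {s : R →ₐ[K] R} {x : R}
    (hs : IsReflection B s x) :
    Submodule.span (SEnvG K R) {1, middle A B x} = ⊤ := by
  refine eq_top_of_forall_tmul_mem_BBg fun f ↦ Submodule.mem_span_pair.2 ?_
  obtain ⟨g, g', hf⟩ := hs.exists_eq_one_tmul_add_tmul (f ⊗ₜ (1 : R))
  refine ⟨rightScalar K g, rightScalar K g', ?_⟩
  simp [hf, tmul_add, Algebra.TensorProduct.one_def, middle, rightScalar, tmul_smul_tmul_tmul]

theorem leftScalar_smul_tmul_B3g (f g : R) (m : BBg R B C) :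
    leftScalar K f • (g ⊗ₜ m : B3g R A B C) = (f * g) ⊗ₜ m := by
  change toB3g K R A B C _ * _ = _
  have h : toB3g K R A B C (leftScalar K f) = f ⊗ₜ 1 := by
    simp [toB3g, leftScalar, rIncl3]
  simp [h]

theorem span_one_third_B3g [IsDomain R] {t u : R →ₐ[K] R} {x y : R} (ht : IsReflection B t x)
    (hu : IsReflection C u y) (hx : x ∈ Set.range (algebraMap A R)) :
    Submodule.span (SEnvG K R) {1, third A B C y} = ⊤ := by
  set P := Submodule.span (SEnvG K R) {1, third A B C y}
  have one_tmul_one_tmul_mem (m : BSg R C) : (1 : R) ⊗ₜ (1 ⊗ₜ m) ∈ P := by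
    obtain ⟨g, g', rfl⟩ := hu.exists_eq_one_tmul_add_tmul m
    refine Submodule.mem_span_pair.2 ⟨rightScalar K g, rightScalar K g', ?_⟩
    simp [tmul_add, Algebra.TensorProduct.one_def, third, rightScalar, tmul_smul_tmul_tmul_tmul]
  refine eq_top_of_forall_tmul_mem_B3g fun f g ↦ ?_
  obtain ⟨a, rfl⟩ := hx
  obtain ⟨m, m', hf⟩ := ht.exists_eq_one_tmul_add_tmul (f ⊗ₜ (g ⊗ₜ (1 : R) : BSg R C))
  rw [hf, tmul_add, one_tmul_algebraMap_tmul, ← mul_one (algebraMap A R a),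
    ← leftScalar_smul_tmul_B3g (K := K)]
  exact add_mem (one_tmul_one_tmul_mem m) (P.smul_mem _ (one_tmul_one_tmul_mem m'))

theorem twistedMul_third (σ : R →ₐ[A] R) (f : R) :
    twistedMul (BBg R B C) σ (third A B C f) = middle B C f := by
  simp [third, middle]

end Generators

section FourTermComplexes

variable {S X₃ X₂ X₁ X₀ Y₃ Y₂ Y₁ Y₀ : Type*} [Ring S]
variable [AddCommGroup X₃] [Module S X₃] [AddCommGroup X₂] [Module S X₂]
variable [AddCommGroup X₁] [Module S X₁] [AddCommGroup X₀] [Module S X₀]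
variable [AddCommGroup Y₃] [Module S Y₃] [AddCommGroup Y₂] [Module S Y₂]
variable [AddCommGroup Y₁] [Module S Y₁] [AddCommGroup Y₀] [Module S Y₀]

/-- Chain maps between complexes concentrated in degrees 3, 2, 1, 0. -/
def IsChainMap (δ₃ : X₃ →ₗ[S] X₂) (δ₂ : X₂ →ₗ[S] X₁) (δ₁ : X₁ →ₗ[S] X₀)
    (ε₃ : Y₃ →ₗ[S] Y₂) (ε₂ : Y₂ →ₗ[S] Y₁) (ε₁ : Y₁ →ₗ[S] Y₀)
    (u₃ : X₃ →ₗ[S] Y₃) (u₂ : X₂ →ₗ[S] Y₂) (u₁ : X₁ →ₗ[S] Y₁) (u₀ : X₀ →ₗ[S] Y₀) : Prop :=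
  u₂ ∘ₗ δ₃ = ε₃ ∘ₗ u₃ ∧ u₁ ∘ₗ δ₂ = ε₂ ∘ₗ u₂ ∧ u₀ ∘ₗ δ₁ = ε₁ ∘ₗ u₁

/-- `h` is a homotopy from the endomorphism `w` of a complex in degrees 3, 2, 1, 0 to the
identity. -/
def IsHomotopyToId (δ₃ : X₃ →ₗ[S] X₂) (δ₂ : X₂ →ₗ[S] X₁) (δ₁ : X₁ →ₗ[S] X₀)
    (w₃ : X₃ →ₗ[S] X₃) (w₂ : X₂ →ₗ[S] X₂) (w₁ : X₁ →ₗ[S] X₁) (w₀ : X₀ →ₗ[S] X₀)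
    (h₂ : X₂ →ₗ[S] X₃) (h₁ : X₁ →ₗ[S] X₂) (h₀ : X₀ →ₗ[S] X₁) : Prop :=
  w₃ + h₂ ∘ₗ δ₃ = LinearMap.id ∧ w₂ + δ₃ ∘ₗ h₂ + h₁ ∘ₗ δ₂ = LinearMap.id ∧
    w₁ + δ₂ ∘ₗ h₁ + h₀ ∘ₗ δ₁ = LinearMap.id ∧ w₀ + δ₁ ∘ₗ h₀ = LinearMap.id

/-- Homotopy equivalence of complexes concentrated in degrees 3, 2, 1, 0. -/
def AreHomotopyEquivalent (δ₃ : X₃ →ₗ[S] X₂) (δ₂ : X₂ →ₗ[S] X₁) (δ₁ : X₁ →ₗ[S] X₀)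
    (ε₃ : Y₃ →ₗ[S] Y₂) (ε₂ : Y₂ →ₗ[S] Y₁) (ε₁ : Y₁ →ₗ[S] Y₀) : Prop :=
  ∃ (u₃ : X₃ →ₗ[S] Y₃) (u₂ : X₂ →ₗ[S] Y₂) (u₁ : X₁ →ₗ[S] Y₁) (u₀ : X₀ →ₗ[S] Y₀)
    (v₃ : Y₃ →ₗ[S] X₃) (v₂ : Y₂ →ₗ[S] X₂) (v₁ : Y₁ →ₗ[S] X₁) (v₀ : Y₀ →ₗ[S] X₀)
    (h₂ : X₂ →ₗ[S] X₃) (h₁ : X₁ →ₗ[S] X₂) (h₀ : X₀ →ₗ[S] X₁)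
    (k₂ : Y₂ →ₗ[S] Y₃) (k₁ : Y₁ →ₗ[S] Y₂) (k₀ : Y₀ →ₗ[S] Y₁),
    IsChainMap δ₃ δ₂ δ₁ ε₃ ε₂ ε₁ u₃ u₂ u₁ u₀ ∧ IsChainMap ε₃ ε₂ ε₁ δ₃ δ₂ δ₁ v₃ v₂ v₁ v₀ ∧
    IsHomotopyToId δ₃ δ₂ δ₁ (v₃ ∘ₗ u₃) (v₂ ∘ₗ u₂) (v₁ ∘ₗ u₁) (v₀ ∘ₗ u₀) h₂ h₁ h₀ ∧
    IsHomotopyToId ε₃ ε₂ ε₁ (u₃ ∘ₗ v₃) (u₂ ∘ₗ v₂) (u₁ ∘ₗ v₁) (u₀ ∘ₗ v₀) k₂ k₁ k₀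

/-- The chain map `F_A F_B F_A → F_B F_A F_B` in degree 1, for `X₀ = B_A` and `X₁ = B_B`. -/
def foldOuter (S X₀ X₁ : Type*) [Ring S] [AddCommGroup X₀] [Module S X₀] [AddCommGroup X₁]
    [Module S X₁] : X₀ × X₁ × X₀ →ₗ[S] X₁ × X₀ × X₁ :=
  (LinearMap.fst _ _ _ ∘ₗ LinearMap.snd _ _ _).prod
    ((LinearMap.coprod LinearMap.id (LinearMap.snd _ _ _)).prod 0)

theorem foldOuter_apply (a c : X₀) (b : X₁) : foldOuter S X₀ X₁ (a, b, c) = (b, a + c, 0) := by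
  simp [foldOuter]

end FourTermComplexes

section RouquierDifferential

variable [SMulCommClass C A R]

/-- `δ₃, δ₂, δ₁` are the differentials of the tensor product complex `F_A F_B F_C`, given on pure
tensors with the Koszul signs. -/
structure IsRouquierDifferential
    (δ₃ : B3g R A B C →ₗ[SEnvG K R] BBg R A B × BBg R A C × BBg R B C)
    (δ₂ : BBg R A B × BBg R A C × BBg R B C →ₗ[SEnvG K R] BSg R A × BSg R B × BSg R C)
    (δ₁ : BSg R A × BSg R B × BSg R C →ₗ[SEnvG K R] R) : Prop where
  three_tmul (x y z w : R) : δ₃ (x ⊗ₜ (y ⊗ₜ (z ⊗ₜ w))) =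
    (x ⊗ₜ (y ⊗ₜ (z * w)), -(x ⊗ₜ ((y * z) ⊗ₜ w)), (x * y) ⊗ₜ (z ⊗ₜ w))
  two_tmul_fst (x y z : R) : δ₂ (x ⊗ₜ (y ⊗ₜ z), 0, 0) = (-(x ⊗ₜ (y * z)), (x * y) ⊗ₜ z, 0)
  two_tmul_snd (x y z : R) : δ₂ (0, x ⊗ₜ (y ⊗ₜ z), 0) = (-(x ⊗ₜ (y * z)), 0, (x * y) ⊗ₜ z)
  two_tmul_thd (x y z : R) : δ₂ (0, 0, x ⊗ₜ (y ⊗ₜ z)) = (0, -(x ⊗ₜ (y * z)), (x * y) ⊗ₜ z)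
  one_tmul (x y z w p q : R) : δ₁ (x ⊗ₜ y, z ⊗ₜ w, p ⊗ₜ q) = x * y + z * w + p * q

namespace IsRouquierDifferential

variable {δ₃ : B3g R A B C →ₗ[SEnvG K R] BBg R A B × BBg R A C × BBg R B C}
variable {δ₂ : BBg R A B × BBg R A C × BBg R B C →ₗ[SEnvG K R] BSg R A × BSg R B × BSg R C}
variable {δ₁ : BSg R A × BSg R B × BSg R C →ₗ[SEnvG K R] R}

theorem three_one (hδ : IsRouquierDifferential δ₃ δ₂ δ₁) : δ₃ 1 = (1, -1, 1) := by
  simpa only [mul_one, ← Algebra.TensorProduct.one_def] using hδ.three_tmul 1 1 1 1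

theorem three_third (hδ : IsRouquierDifferential δ₃ δ₂ δ₁) (f : R) :
    δ₃ (third A B C f) = (rightScalar K f • 1, -middle A C f, middle B C f) := by
  rw [third, hδ.three_tmul]
  simp [middle, rightScalar, Algebra.TensorProduct.one_def, tmul_smul_tmul_tmul]

theorem two_one_fst (hδ : IsRouquierDifferential δ₃ δ₂ δ₁) : δ₂ (1, 0, 0) = (-1, 1, 0) := by
  simpa only [mul_one, ← Algebra.TensorProduct.one_def] using hδ.two_tmul_fst 1 1 1

theorem two_one_snd (hδ : IsRouquierDifferential δ₃ δ₂ δ₁) : δ₂ (0, 1, 0) = (-1, 0, 1) := by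
  simpa only [mul_one, ← Algebra.TensorProduct.one_def] using hδ.two_tmul_snd 1 1 1

theorem two_one_thd (hδ : IsRouquierDifferential δ₃ δ₂ δ₁) : δ₂ (0, 0, 1) = (0, -1, 1) := by
  simpa only [mul_one, ← Algebra.TensorProduct.one_def] using hδ.two_tmul_thd 1 1 1

theorem two_middle_snd (hδ : IsRouquierDifferential δ₃ δ₂ δ₁) (f : R) :
    δ₂ (0, middle A C f, 0) = (-(rightScalar K f • 1), 0, leftScalar K f • 1) := by
  rw [middle, hδ.two_tmul_snd]
  simp [rightScalar, leftScalar, Algebra.TensorProduct.one_def, tmul_smul_tmul]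

theorem one_fst (hδ : IsRouquierDifferential δ₃ δ₂ δ₁) : δ₁ (1, 0, 0) = 1 := by
  simpa [← Algebra.TensorProduct.one_def] using hδ.one_tmul 1 1 0 0 0 0

theorem one_snd (hδ : IsRouquierDifferential δ₃ δ₂ δ₁) : δ₁ (0, 1, 0) = 1 := by
  simpa [← Algebra.TensorProduct.one_def] using hδ.one_tmul 0 0 1 1 0 0

theorem one_thd (hδ : IsRouquierDifferential δ₃ δ₂ δ₁) : δ₁ (0, 0, 1) = 1 := by
  simpa [← Algebra.TensorProduct.one_def] using hδ.one_tmul 0 0 0 0 1 1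

theorem two_comp_three (hδ : IsRouquierDifferential δ₃ δ₂ δ₁) : δ₂ ∘ₗ δ₃ = 0 := by
  refine LinearMap.ker_eq_top.1 (eq_top_of_forall_tmul_mem_B3g fun f g ↦ ?_)
  have split (a : BBg R A B) (b : BBg R A C) (c : BBg R B C) :
      (a, -b, c) = (a, 0, 0) - (0, b, 0) + (0, 0, c) := by simp
  rw [LinearMap.mem_ker, LinearMap.comp_apply, hδ.three_tmul, split, map_add, map_sub,
    hδ.two_tmul_fst, hδ.two_tmul_snd, hδ.two_tmul_thd]
  simp

theorem one_comp_two (hδ : IsRouquierDifferential δ₃ δ₂ δ₁) : δ₁ ∘ₗ δ₂ = 0 := by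
  refine LinearMap.prod_ext ?_ (LinearMap.prod_ext ?_ ?_) <;>
  refine LinearMap.ker_eq_top.1 (eq_top_of_forall_tmul_mem_BBg fun f ↦ ?_)
  · change δ₁ (δ₂ (1 ⊗ₜ (f ⊗ₜ 1), 0, 0)) = 0
    simpa [hδ.two_tmul_fst, ← neg_tmul] using hδ.one_tmul (-1) f f 1 0 0
  · change δ₁ (δ₂ (0, 1 ⊗ₜ (f ⊗ₜ 1), 0)) = 0
    simpa [hδ.two_tmul_snd, ← neg_tmul] using hδ.one_tmul (-1) f 0 0 f 1
  · change δ₁ (δ₂ (0, 0, 1 ⊗ₜ (f ⊗ₜ 1))) = 0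
    simpa [hδ.two_tmul_thd, ← neg_tmul] using hδ.one_tmul 0 0 (-1) f f 1

end IsRouquierDifferential

end RouquierDifferential

section Contraction

variable [IsDomain R] {s t : R →ₐ[K] R} {x x₁ x₂ x₃ : R} {p q : SEnvG K R}

theorem IsReflection.mem_graphIdeal_of_smul_one_add_smul_middle_eq_zero (hs : IsReflection A s x)
    (hpq : p • 1 + q • middle A A x = 0) : q ∈ graphIdeal {1, s} := by
  have hpq' : twistedMul _ (AlgHom.id A R) (p • 1 + q • middle A A x) = 0 ∧
    twistedMul _ hs.toAlgHom (p • 1 + q • middle A A x) = 0 := by simp [hpq]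
  simp only [middle, map_add, twistedMul_smul_BBg, map_one, twistedMul_tmul, one_smul,
    restrictScalars_id, hs.restrictScalars_toAlgHom, leftTwist_one,
    ← leftScalar_smul_one_BSg (K := K), smul_smul, ← add_smul, hs.smul_one_BSg_eq_zero_iff] at hpq'
  exact hs.mem_graphIdeal_of_add_mul_mem hpq'.1 hpq'.2

theorem IsReflection.exists_linearMap_middle {M : Type*} [AddCommGroup M] [Module (SEnvG K R) M]
    (hs : IsReflection A s x) {m : M} (hm : ∀ q ∈ graphIdeal {1, s}, q • m = 0) :
    ∃ f : BBg R A A →ₗ[SEnvG K R] M, f 1 = 0 ∧ f (middle A A x) = m :=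
  exists_linearMap_of_span_pair (span_one_middle_BBg hs) fun p q hpq ↦ by
    rw [smul_zero, zero_add,
      hm q (hs.mem_graphIdeal_of_smul_one_add_smul_middle_eq_zero hpq)]

theorem IsReflection.exists_comul (hs : IsReflection A s x) :
    ∃ f : BSg R A →ₗ[SEnvG K R] BBg R A A, f 1 = 1 :=
  exists_linearMap_of_span_singleton span_one_BSg fun p hp ↦ by
    rw [hs.smul_one_BSg_eq_zero_iff] at hp
    exact (hs.smul_one_BBg_eq_zero_iff hs).2
      (mem_graphIdeal_mul_pair.2 ⟨hp, hs.leftTwist_mem_graphIdeal hp⟩)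

namespace IsBraidPair

theorem exists_toBB (h : IsBraidPair A B s t x₁ x₂ x₃) :
    ∃ f : BBg R A B →ₗ[SEnvG K R] BBg R B B, f 1 = 1 := by
  have hs := h.reflection_left
  have ht := h.reflection_right
  refine exists_linearMap_of_span_singleton (span_one_BBg ht h.mem_range_left) fun p hp ↦ ?_
  rw [hs.smul_one_BBg_eq_zero_iff ht, mem_graphIdeal_mul_pair] at hp
  exact (ht.smul_one_BBg_eq_zero_iff ht).2
    (mem_graphIdeal_mul_pair.2 ⟨hp.1, ht.leftTwist_mem_graphIdeal hp.1⟩)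

theorem exists_contractToAB (h : IsBraidPair A B s t x₁ x₂ x₃) :
    ∃ f : BBg R A A →ₗ[SEnvG K R] BBg R A B, f 1 = 0 ∧ f (middle A A x₁) =
      (rightScalar K x₁ + rightScalar K x₃ - leftScalar K x₁ - leftScalar K x₂) • 1 :=
  h.reflection_left.exists_linearMap_middle fun q hq ↦ by
    rw [smul_smul, h.reflection_left.smul_one_BBg_eq_zero_iff h.reflection_right]
    exact h.mul_rightScalar_add_sub_leftScalar_mem hq

theorem exists_contractToBA (h : IsBraidPair B A s t x₁ x₂ x₃) :
    ∃ f : BBg R B B →ₗ[SEnvG K R] BBg R A B, f 1 = 0 ∧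
      f (middle B B x₁) = (rightScalar K x₃ - leftScalar K x₂) • 1 :=
  h.reflection_left.exists_linearMap_middle fun q hq ↦ by
    rw [smul_smul, h.reflection_right.smul_one_BBg_eq_zero_iff h.reflection_left]
    exact h.mul_rightScalar_sub_leftScalar_mem hq

end IsBraidPair

end Contraction

section BraidMaps

variable [SMulCommClass A B R]

/-- The element of `B_A B_B B_A` generating the summand `B_A` complementary to the one generated
by `1`. -/
def complementGenerator (K A B : Type) {R : Type} [Field K] [CommRing R] [Algebra K R]
    [CommRing A] [Algebra K A] [Algebra A R] [IsScalarTower K A R]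
    [CommRing B] [Algebra K B] [Algebra B R] [IsScalarTower K B R]
    [SMulCommClass A B R] [SMulCommClass B A R] (x₁ x₂ x₃ : R) : B3g R A B A :=
  (leftScalar K x₁ + leftScalar K x₂ - rightScalar K x₃) • 1 - third A B A x₁

/-- The bimodule maps from which the homotopy equivalence between `F_A F_B F_A` and `F_B F_A F_B`
is assembled, given by their values on generators. -/
structure BraidMaps (K A B : Type) {R : Type} [Field K] [CommRing R] [Algebra K R]
    [CommRing A] [Algebra K A] [Algebra A R] [IsScalarTower K A R]
    [CommRing B] [Algebra K B] [Algebra B R] [IsScalarTower K B R]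
    [SMulCommClass A B R] [SMulCommClass B A R] (x₁ x₂ x₃ : R) where
  triple : B3g R A B A →ₗ[SEnvG K R] B3g R B A B
  triple_one : triple 1 = 1
  triple_third : triple (third A B A x₁) =
    (leftScalar K x₁ + leftScalar K x₂ - rightScalar K x₃) • 1
  comul : BSg R A →ₗ[SEnvG K R] BBg R A A
  comul_one : comul 1 = 1
  toBB : BBg R A B →ₗ[SEnvG K R] BBg R B B
  toBB_one : toBB 1 = 1
  contractToBA : BBg R A A →ₗ[SEnvG K R] BBg R B A
  contractToBA_one : contractToBA 1 = 0
  contractToBA_middle : contractToBA (middle A A x₁) = (rightScalar K x₃ - leftScalar K x₂) • 1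
  contractToAB : BBg R A A →ₗ[SEnvG K R] BBg R A B
  contractToAB_one : contractToAB 1 = 0
  contractToAB_middle : contractToAB (middle A A x₁) =
    (rightScalar K x₁ + rightScalar K x₃ - leftScalar K x₁ - leftScalar K x₂) • 1
  contractToABA : BBg R A A →ₗ[SEnvG K R] B3g R A B A
  contractToABA_one : contractToABA 1 = 0
  contractToABA_middle : contractToABA (middle A A x₁) = complementGenerator K A B x₁ x₂ x₃

section Existence

variable [IsDomain R] {s t : R →ₐ[K] R} {x₁ x₂ x₃ : R} {p q : SEnvG K R}

namespace IsBraidPair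

theorem smul_complementGenerator (h : IsBraidPair A B s t x₁ x₂ x₃)
    (hq : q ∈ graphIdeal {1, s}) : q • complementGenerator K A B x₁ x₂ x₃ = 0 := by
  have hs := h.reflection_left
  have ht := h.reflection_right
  have middle_eq := middle_eq_leftScalar_smul_one (K := K) (B := A) h.mem_range_right
  have smul_eq_zero {r : SEnvG K R} (hr : r ∈ graphIdeal {1, s}) :
      r • (leftScalar K x₂ - rightScalar K x₃) • (1 : BBg R B A) = 0 := by
    rw [smul_smul, ht.smul_one_BBg_eq_zero_iff hs, ← neg_sub, mul_neg]
    exact neg_mem (h.mul_rightScalar_sub_leftScalar_mem hr)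
  rw [hs.smul_B3g_eq_zero_iff ht hs]
  convert And.intro (smul_eq_zero hq) (smul_eq_zero (hs.leftTwist_mem_graphIdeal hq)) using 3
  · rw [complementGenerator, map_sub, twistedMul_smul_B3g, twistedMul_third, middle_eq, map_one]
    simp only [restrictScalars_id, leftTwist_one]
    rw [← sub_smul]
    ring_nf
  · rw [complementGenerator, map_sub, twistedMul_smul_B3g, twistedMul_third, middle_eq, map_one]
    simp only [hs.restrictScalars_toAlgHom, map_add, map_sub, leftTwist_leftScalar,
      leftTwist_rightScalar, h.left_apply₁, h.left_apply₂]
    rw [← sub_smul]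
    ring_nf

theorem mem_graphIdeal_of_smul_one_add_smul_third_eq_zero (h : IsBraidPair A B s t x₁ x₂ x₃)
    (hpq : p • 1 + q • third A B A x₁ = 0) : q ∈ graphIdeal {1, s} := by
  have hs := h.reflection_left
  have ht := h.reflection_right
  have hpq' : twistedMul _ (AlgHom.id A R) (p • 1 + q • third A B A x₁) = 0 ∧
    twistedMul _ hs.toAlgHom (p • 1 + q • third A B A x₁) = 0 := by simp [hpq]
  simp only [map_add, twistedMul_smul_B3g, map_one, twistedMul_third,
    middle_eq_leftScalar_smul_one (K := K) h.mem_range_right,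
    restrictScalars_id, hs.restrictScalars_toAlgHom, leftTwist_one, smul_smul, ← add_smul,
    ht.smul_one_BBg_eq_zero_iff hs] at hpq'
  have hle : graphIdeal (K := K) ({1, s} * {1, t}) ≤ graphIdeal {1, s} :=
    fun r hr ↦ (mem_graphIdeal_mul_pair.1 hr).1
  exact hs.mem_graphIdeal_of_add_mul_mem (hle hpq'.1) (hle hpq'.2)

theorem smul_one_B3g_eq_zero (h : IsBraidPair A B s t x₁ x₂ x₃)
    (hp : p • (1 : B3g R A B A) = 0) : p • (1 : B3g R B A B) = 0 := by
  have hs := h.reflection_left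
  have ht := h.reflection_right
  rw [hs.smul_one_B3g_eq_zero_iff ht hs] at hp
  rw [ht.smul_one_B3g_eq_zero_iff hs ht]
  exact graphIdeal_anti (pair_mul_pair_mul_pair_subset ht.mul_self h.braid.symm) hp

theorem exists_triple (h : IsBraidPair A B s t x₁ x₂ x₃) :
    ∃ f : B3g R A B A →ₗ[SEnvG K R] B3g R B A B, f 1 = 1 ∧ f (third A B A x₁) =
      (leftScalar K x₁ + leftScalar K x₂ - rightScalar K x₃) • 1 := by
  refine exists_linearMap_of_span_pair (span_one_third_B3g h.reflection_right h.reflection_left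
    h.mem_range_left) fun p q hpq ↦ ?_
  have hq := h.smul_complementGenerator (h.mem_graphIdeal_of_smul_one_add_smul_third_eq_zero hpq)
  rw [smul_smul, ← add_smul]
  refine h.smul_one_B3g_eq_zero ?_
  rw [complementGenerator, smul_sub, sub_eq_zero] at hq
  rw [add_smul, ← smul_smul, hq, hpq]

theorem exists_contractToABA (h : IsBraidPair A B s t x₁ x₂ x₃) :
    ∃ f : BBg R A A →ₗ[SEnvG K R] B3g R A B A, f 1 = 0 ∧
      f (middle A A x₁) = complementGenerator K A B x₁ x₂ x₃ :=
  h.reflection_left.exists_linearMap_middle fun _ ↦ h.smul_complementGenerator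

theorem nonempty_braidMaps (h : IsBraidPair A B s t x₁ x₂ x₃) :
    Nonempty (BraidMaps K A B x₁ x₂ x₃) := by
  obtain ⟨triple, triple_one, triple_third⟩ := h.exists_triple
  obtain ⟨comul, comul_one⟩ := h.reflection_left.exists_comul
  obtain ⟨toBB, toBB_one⟩ := h.exists_toBB
  obtain ⟨contractToBA, contractToBA_one, contractToBA_middle⟩ := h.exists_contractToBA
  obtain ⟨contractToAB, contractToAB_one, contractToAB_middle⟩ := h.exists_contractToAB
  obtain ⟨contractToABA, contractToABA_one, contractToABA_middle⟩ := h.exists_contractToABA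
  constructor
  constructor <;> assumption

end IsBraidPair

end Existence

variable {M : Type*} [AddCommGroup M] [Module (SEnvG K R) M]
variable {s t : R →ₐ[K] R} {x₁ x₂ x₃ : R}

theorem IsBraidPair.hom_ext_two [IsDomain R] (h : IsBraidPair A B s t x₁ x₂ x₃)
    {f g : BBg R A B × BBg R A A × BBg R B A →ₗ[SEnvG K R] M}
    (h_fst : f (1, 0, 0) = g (1, 0, 0)) (h_snd : f (0, 1, 0) = g (0, 1, 0))
    (h_snd_middle : f (0, middle A A x₁, 0) = g (0, middle A A x₁, 0))
    (h_thd : f (0, 0, 1) = g (0, 0, 1)) : f = g := by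
  refine LinearMap.prod_ext ?_ (LinearMap.prod_ext ?_ ?_)
  · exact LinearMap.ext_on (span_one_BBg h.reflection_right h.mem_range_left) (by simpa)
  · exact LinearMap.ext_on (span_one_middle_BBg h.reflection_left)
      (by simp [Set.EqOn, h_snd, h_snd_middle])
  · exact LinearMap.ext_on (span_one_BBg h.reflection_left h.mem_range_right) (by simpa)

theorem IsBraidPair.hom_ext_three [IsDomain R] (h : IsBraidPair A B s t x₁ x₂ x₃)
    {f g : B3g R A B A →ₗ[SEnvG K R] M} (h_one : f 1 = g 1)
    (h_third : f (third A B A x₁) = g (third A B A x₁)) : f = g :=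
  LinearMap.ext_on (span_one_third_B3g h.reflection_right h.reflection_left h.mem_range_left)
    (by simp [Set.EqOn, h_one, h_third])

theorem IsRouquierDifferential.id_comp_one
    {δ₃ : B3g R A B A →ₗ[SEnvG K R] BBg R A B × BBg R A A × BBg R B A}
    {δ₂ : BBg R A B × BBg R A A × BBg R B A →ₗ[SEnvG K R] BSg R A × BSg R B × BSg R A}
    {δ₁ : BSg R A × BSg R B × BSg R A →ₗ[SEnvG K R] R}
    {ε₃ : B3g R B A B →ₗ[SEnvG K R] BBg R B A × BBg R B B × BBg R A B}
    {ε₂ : BBg R B A × BBg R B B × BBg R A B →ₗ[SEnvG K R] BSg R B × BSg R A × BSg R B}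
    {ε₁ : BSg R B × BSg R A × BSg R B →ₗ[SEnvG K R] R}
    (hδ : IsRouquierDifferential δ₃ δ₂ δ₁)
    (hε : IsRouquierDifferential ε₃ ε₂ ε₁) :
    LinearMap.id ∘ₗ δ₁ = ε₁ ∘ₗ foldOuter _ _ _ :=
  hom_ext_one (by simp [hδ.one_fst, hε.one_snd, foldOuter_apply])
    (by simp [hδ.one_snd, hε.one_fst, foldOuter_apply])
    (by simp [hδ.one_thd, hε.one_snd, foldOuter_apply])

namespace BraidMaps

variable (F : BraidMaps K A B x₁ x₂ x₃) (G : BraidMaps K B A x₃ x₂ x₁)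

/-- The chain map `F_A F_B F_A → F_B F_A F_B` in degree 2. -/
def two : BBg R A B × BBg R A A × BBg R B A →ₗ[SEnvG K R] BBg R B A × BBg R B B × BBg R A B :=
  let toAB : BBg R A B × BBg R A A × BBg R B A →ₗ[SEnvG K R] BBg R A B :=
    LinearMap.coprod LinearMap.id (LinearMap.coprod F.contractToAB 0)
  (LinearMap.coprod 0 (LinearMap.coprod F.contractToBA LinearMap.id)).prod
    ((-(F.toBB ∘ₗ toAB)).prod toAB)

theorem two_apply (a : BBg R A B) (b : BBg R A A) (c : BBg R B A) :
    F.two (a, b, c) = (F.contractToBA b + c, -F.toBB (a + F.contractToAB b),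
      a + F.contractToAB b) := by
  simp [two]

/-- The homotopy on `F_A F_B F_A` from degree 2 to degree 3. -/
def homotopyTwo : BBg R A B × BBg R A A × BBg R B A →ₗ[SEnvG K R] B3g R A B A :=
  F.contractToABA ∘ₗ LinearMap.fst _ _ _ ∘ₗ LinearMap.snd _ _ _

theorem homotopyTwo_apply (a : BBg R A B) (b : BBg R A A) (c : BBg R B A) :
    F.homotopyTwo (a, b, c) = F.contractToABA b := rfl

/-- The homotopy on `F_A F_B F_A` from degree 1 to degree 2. -/
def homotopyOne : BSg R A × BSg R B × BSg R A →ₗ[SEnvG K R] BBg R A B × BBg R A A × BBg R B A :=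
  LinearMap.prod 0 ((F.comul ∘ₗ LinearMap.snd _ _ _ ∘ₗ LinearMap.snd _ _ _).prod 0)

theorem homotopyOne_apply (a : BSg R A) (b : BSg R B) (c : BSg R A) :
    F.homotopyOne (a, b, c) = (0, F.comul c, 0) := rfl

variable {δ₃ : B3g R A B A →ₗ[SEnvG K R] BBg R A B × BBg R A A × BBg R B A}
variable {δ₂ : BBg R A B × BBg R A A × BBg R B A →ₗ[SEnvG K R] BSg R A × BSg R B × BSg R A}
variable {δ₁ : BSg R A × BSg R B × BSg R A →ₗ[SEnvG K R] R}
variable {ε₃ : B3g R B A B →ₗ[SEnvG K R] BBg R B A × BBg R B B × BBg R A B}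
variable {ε₂ : BBg R B A × BBg R B B × BBg R A B →ₗ[SEnvG K R] BSg R B × BSg R A × BSg R B}
variable {ε₁ : BSg R B × BSg R A × BSg R B →ₗ[SEnvG K R] R}

theorem two_fst : F.two (1, 0, 0) = (0, -1, 1) := by
  simp [two_apply, toBB_one]

theorem two_snd : F.two (0, 1, 0) = 0 := by
  simp [two_apply, contractToBA_one, contractToAB_one]

theorem two_thd : F.two (0, 0, 1) = (1, 0, 0) := by
  simp [two_apply]

theorem two_middle : F.two (0, middle A A x₁, 0) =
    (rightScalar K x₃ - leftScalar K x₂) • (1, 0, 0) +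
      (rightScalar K x₁ + rightScalar K x₃ - leftScalar K x₁ - leftScalar K x₂) • (0, -1, 1) := by
  simp [two_apply, contractToBA_middle, contractToAB_middle, toBB_one]

theorem two_comp_three [IsDomain R] (h : IsBraidPair A B s t x₁ x₂ x₃)
    (hδ : IsRouquierDifferential δ₃ δ₂ δ₁) (hε : IsRouquierDifferential ε₃ ε₂ ε₁) :
    F.two ∘ₗ δ₃ = ε₃ ∘ₗ F.triple := by
  refine h.hom_ext_three ?_ ?_
  · simp [hδ.three_one, F.two_apply, F.contractToBA_one, F.contractToAB_one, F.toBB_one,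
      F.triple_one, hε.three_one]
  · have split : δ₃ (third A B A x₁) = rightScalar K x₁ • (1, 0, 0) -
        (0, middle A A x₁, 0) + leftScalar K x₁ • (0, 0, 1) := by
      simp [hδ.three_third, middle_eq_leftScalar_smul_one (K := K) h.mem_range_right]
    simp only [LinearMap.comp_apply, split, map_add, map_sub, map_smul, F.two_fst, F.two_middle,
      F.two_thd, F.triple_third, hε.three_one]
    simp only [Prod.smul_mk, Prod.mk_sub_mk, Prod.mk_add_mk, smul_zero, smul_neg, sub_smul,
      add_smul, Prod.mk.injEq]
    refine ⟨?_, ?_, ?_⟩ <;> abel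

theorem one_comp_two [IsDomain R] (h : IsBraidPair A B s t x₁ x₂ x₃)
    (hδ : IsRouquierDifferential δ₃ δ₂ δ₁) (hε : IsRouquierDifferential ε₃ ε₂ ε₁) :
    foldOuter _ _ _ ∘ₗ δ₂ = ε₂ ∘ₗ F.two := by
  have hε_neg : ε₂ (0, -1, 1) = (1, -1, 0) := by
    rw [show ((0, -1, 1) : BBg R B A × BBg R B B × BBg R A B) = (0, 0, 1) - (0, 1, 0) by simp,
      map_sub, hε.two_one_thd, hε.two_one_snd]
    simp
  refine h.hom_ext_two ?_ ?_ ?_ ?_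
  · simp [hδ.two_one_fst, F.two_fst, hε_neg, foldOuter_apply]
  · simp [hδ.two_one_snd, F.two_snd, foldOuter_apply]
  · obtain ⟨b, hb⟩ := h.mem_range_right
    have hx₁ := leftScalar_algebraMap_smul_one_BSg (K := K) (R := R) b
    rw [hb] at hx₁
    simp only [LinearMap.comp_apply, hδ.two_middle_snd, foldOuter_apply, F.two_middle, map_add,
      map_smul, hε.two_one_fst, hε_neg]
    simp only [Prod.smul_mk, Prod.mk_sub_mk, Prod.mk_add_mk, smul_zero, smul_neg, add_smul,
      sub_smul, hx₁, Prod.mk.injEq]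
    refine ⟨?_, ?_, ?_⟩ <;> abel
  · simp [hδ.two_one_thd, F.two_thd, hε.two_one_fst, foldOuter_apply]

theorem isChainMap [IsDomain R] (h : IsBraidPair A B s t x₁ x₂ x₃)
    (hδ : IsRouquierDifferential δ₃ δ₂ δ₁) (hε : IsRouquierDifferential ε₃ ε₂ ε₁) :
    IsChainMap δ₃ δ₂ δ₁ ε₃ ε₂ ε₁ F.triple F.two (foldOuter _ _ _) LinearMap.id :=
  ⟨F.two_comp_three h hδ hε, F.one_comp_two h hδ hε, hδ.id_comp_one hε⟩

theorem triple_comp_triple_add [IsDomain R] (h : IsBraidPair A B s t x₁ x₂ x₃)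
    (hδ : IsRouquierDifferential δ₃ δ₂ δ₁) :
    G.triple ∘ₗ F.triple + F.homotopyTwo ∘ₗ δ₃ = LinearMap.id := by
  refine h.hom_ext_three ?_ ?_
  · simp [hδ.three_one, F.triple_one, G.triple_one, F.homotopyTwo_apply, F.contractToABA_one]
  · simp [hδ.three_third, F.triple_third, G.triple_one, F.homotopyTwo_apply,
      F.contractToABA_middle, complementGenerator]

theorem two_comp_two_add [IsDomain R] (h : IsBraidPair A B s t x₁ x₂ x₃)
    (hδ : IsRouquierDifferential δ₃ δ₂ δ₁) :
    G.two ∘ₗ F.two + δ₃ ∘ₗ F.homotopyTwo + F.homotopyOne ∘ₗ δ₂ = LinearMap.id := by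
  have hG_neg : G.two (0, -1, 1) = (1, 0, 0) := by
    simp [two_apply, contractToBA_one, contractToAB_one]
  refine h.hom_ext_two ?_ ?_ ?_ ?_
  · simp [F.two_fst, hG_neg, F.homotopyTwo_apply, hδ.two_one_fst, F.homotopyOne_apply]
  · simp [F.two_snd, F.homotopyTwo_apply, F.contractToABA_one, hδ.two_one_snd,
      F.homotopyOne_apply, F.comul_one]
  · simp only [LinearMap.add_apply, LinearMap.comp_apply, LinearMap.id_apply, F.two_middle,
      map_add, map_sub, map_smul, G.two_fst, hG_neg, F.homotopyTwo_apply, F.contractToABA_middle,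
      complementGenerator, hδ.three_one, hδ.three_third, hδ.two_middle_snd, F.homotopyOne_apply,
      F.comul_one, middle_eq_leftScalar_smul_one (K := K) h.mem_range_right]
    simp only [Prod.smul_mk, Prod.mk_sub_mk, Prod.mk_add_mk, smul_zero, smul_neg, add_smul,
      sub_smul, Prod.mk.injEq]
    refine ⟨?_, ?_, ?_⟩ <;> abel
  · simp [F.two_thd, G.two_fst, F.homotopyTwo_apply, hδ.two_one_thd, F.homotopyOne_apply,
      F.comul_one]

theorem foldOuter_comp_foldOuter_add (hδ : IsRouquierDifferential δ₃ δ₂ δ₁) :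
    foldOuter _ _ _ ∘ₗ foldOuter _ _ _ + δ₂ ∘ₗ F.homotopyOne + 0 ∘ₗ δ₁ = LinearMap.id :=
  have two_zero : δ₂ (0, 0, 0) = 0 := δ₂.map_zero
  hom_ext_one (by simp [foldOuter_apply, F.homotopyOne_apply, two_zero])
    (by simp [foldOuter_apply, F.homotopyOne_apply, two_zero])
    (by simp [foldOuter_apply, F.homotopyOne_apply, F.comul_one, hδ.two_one_snd])

theorem isHomotopyToId [IsDomain R] (h : IsBraidPair A B s t x₁ x₂ x₃)
    (hδ : IsRouquierDifferential δ₃ δ₂ δ₁) :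
    IsHomotopyToId δ₃ δ₂ δ₁ (G.triple ∘ₗ F.triple) (G.two ∘ₗ F.two)
      (foldOuter _ _ _ ∘ₗ foldOuter _ _ _) (LinearMap.id ∘ₗ LinearMap.id)
      F.homotopyTwo F.homotopyOne 0 :=
  ⟨F.triple_comp_triple_add G h hδ, F.two_comp_two_add G h hδ,
    F.foldOuter_comp_foldOuter_add hδ, by simp⟩

end BraidMaps

theorem IsBraidPair.areHomotopyEquivalent [IsDomain R] (h : IsBraidPair A B s t x₁ x₂ x₃)
    {δ₃ : B3g R A B A →ₗ[SEnvG K R] BBg R A B × BBg R A A × BBg R B A}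
    {δ₂ : BBg R A B × BBg R A A × BBg R B A →ₗ[SEnvG K R] BSg R A × BSg R B × BSg R A}
    {δ₁ : BSg R A × BSg R B × BSg R A →ₗ[SEnvG K R] R}
    (hδ : IsRouquierDifferential δ₃ δ₂ δ₁)
    {ε₃ : B3g R B A B →ₗ[SEnvG K R] BBg R B A × BBg R B B × BBg R A B}
    {ε₂ : BBg R B A × BBg R B B × BBg R A B →ₗ[SEnvG K R] BSg R B × BSg R A × BSg R B}
    {ε₁ : BSg R B × BSg R A × BSg R B →ₗ[SEnvG K R] R}
    (hε : IsRouquierDifferential ε₃ ε₂ ε₁) :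
    AreHomotopyEquivalent δ₃ δ₂ δ₁ ε₃ ε₂ ε₁ := by
  obtain ⟨F⟩ := h.nonempty_braidMaps
  obtain ⟨G⟩ := h.swap.nonempty_braidMaps
  exact ⟨F.triple, F.two, foldOuter _ _ _, LinearMap.id,
    G.triple, G.two, foldOuter _ _ _, LinearMap.id,
    F.homotopyTwo, F.homotopyOne, 0, G.homotopyTwo, G.homotopyOne, 0,
    F.isChainMap h hδ hε, G.isChainMap h.swap hε hδ,
    F.isHomotopyToId G h hδ, G.isHomotopyToId F h.swap hε⟩

end BraidMaps

end Bimodule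

end

section Polynomial

theorem X_sub_X_dvd_sub_rename_swap {σ K : Type*} [DecidableEq σ] [CommRing K] (i j : σ)
    (f : MvPolynomial σ K) : X i - X j ∣ f - rename (Equiv.swap i j) f := by
  let I : Ideal (MvPolynomial σ K) := Ideal.span {X i - X j}
  have hij : Ideal.Quotient.mkₐ K I (X i) = Ideal.Quotient.mkₐ K I (X j) :=
    Ideal.Quotient.eq.2 (Ideal.mem_span_singleton_self _)
  have hmk : Ideal.Quotient.mkₐ K I = (Ideal.Quotient.mkₐ K I).comp (rename (Equiv.swap i j)) := by
    refine MvPolynomial.algHom_ext fun k ↦ ?_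
    rw [AlgHom.comp_apply, rename_X, Equiv.swap_apply_def]
    split_ifs with hi hj
    · rw [hi, hij]
    · rw [hj, hij]
    · rfl
  exact Ideal.mem_span_singleton.1 (Ideal.Quotient.eq.1 (DFunLike.congr_fun hmk f))

variable (K : Type) [Field K] {N : ℕ} {i j k : Fin N}

theorem isReflection_rename_swap (hij : i ≠ j) :
    IsReflection (swapInv K N i j) (rename (Equiv.swap i j) : Rp K N →ₐ[K] Rp K N) (X i) where
  involutive f := by simp [rename_rename, ← Equiv.coe_trans]
  apply_eq_self_iff f := by rw [Subalgebra.setRange_algebraMap]; rfl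
  apply_ne := by simpa [X_inj] using hij.symm
  sub_dvd_sub f := by simpa using X_sub_X_dvd_sub_rename_swap i j f

theorem isBraidPair_rename_swap (hij : i ≠ j) (hjk : j ≠ k) (hik : i ≠ k) :
    IsBraidPair (swapInv K N i j) (swapInv K N j k)
      (rename (Equiv.swap i j) : Rp K N →ₐ[K] Rp K N) (rename (Equiv.swap j k))
      (X i) (X j) (X k) where
  reflection_left := isReflection_rename_swap K hij
  reflection_right := by simpa using (isReflection_rename_swap K hjk).apply
  left_apply₁ := by simp
  left_apply₃ := by simp [Equiv.swap_apply_of_ne_of_ne hik.symm hjk.symm]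
  right_apply₁ := by simp [Equiv.swap_apply_of_ne_of_ne hij hik]
  right_apply₃ := by simp
  braid := by
    refine MvPolynomial.algHom_ext fun l ↦ ?_
    simp only [AlgHom.mul_apply, rename_X]
    congr 1
    grind

end Polynomial

end Rouquier

open Rouquier in
theorem rouquier_complexes_satisfy_braid_relation_general
    {K R A B : Type} [Field K] [CommRing R] [IsDomain R] [Algebra K R]
    [CommRing A] [Algebra K A] [Algebra A R] [IsScalarTower K A R]
    [CommRing B] [Algebra K B] [Algebra B R] [IsScalarTower K B R]
    [SMulCommClass A B R] [SMulCommClass B A R]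
    {s t : R →ₐ[K] R} {x₁ x₂ x₃ : R} (h : IsBraidPair A B s t x₁ x₂ x₃)
    {δ₃ : B3g R A B A →ₗ[SEnvG K R] BBg R A B × BBg R A A × BBg R B A}
    {δ₂ : BBg R A B × BBg R A A × BBg R B A →ₗ[SEnvG K R] BSg R A × BSg R B × BSg R A}
    {δ₁ : BSg R A × BSg R B × BSg R A →ₗ[SEnvG K R] R}
    (hδ : IsRouquierDifferential δ₃ δ₂ δ₁)
    {ε₃ : B3g R B A B →ₗ[SEnvG K R] BBg R B A × BBg R B B × BBg R A B}
    {ε₂ : BBg R B A × BBg R B B × BBg R A B →ₗ[SEnvG K R] BSg R B × BSg R A × BSg R B}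
    {ε₁ : BSg R B × BSg R A × BSg R B →ₗ[SEnvG K R] R}
    (hε : IsRouquierDifferential ε₃ ε₂ ε₁) :
    (δ₂ ∘ₗ δ₃ = 0 ∧ δ₁ ∘ₗ δ₂ = 0 ∧ ε₂ ∘ₗ ε₃ = 0 ∧ ε₁ ∘ₗ ε₂ = 0) ∧
      AreHomotopyEquivalent δ₃ δ₂ δ₁ ε₃ ε₂ ε₁ :=
  ⟨⟨hδ.two_comp_three, hδ.one_comp_two, hε.two_comp_three, hε.one_comp_two⟩,
    h.areHomotopyEquivalent hδ hε⟩

/-- fix `1 ≤ i ≤ N-2` (below `i' = i+1` and `i'' = i+2`, so that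
`s = s_i` and `t = s_{i+1}`).  Realize the triple tensor product complexes of
`R`-bimodules as the four-term complexes (degrees 3, 2, 1, 0)
`F_i ⊗_R F_{i+1} ⊗_R F_i = (B_sB_tB_s --δ₃--> B_sB_t × B_sB_s × B_tB_s
  --δ₂--> B_s × B_t × B_s --δ₁--> R)` and
`F_{i+1} ⊗_R F_i ⊗_R F_{i+1} = (B_tB_sB_t --ε₃--> B_tB_s × B_tB_t × B_sB_t
  --ε₂--> B_t × B_s × B_t --ε₁--> R)`,
with the Koszul-sign differentials (uniquely) pinned down by the formulas
below.  Then both are complexes, and they are homotopy equivalent as complexes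
of `R`-bimodules: there are chain maps `u`, `v` in both directions and chain
homotopies `h`, `k` from `v ∘ u` and `u ∘ v` to the identities. -/
theorem rouquier_complexes_satisfy_braid_relation
    (K : Type) [Field K] [CharZero K] (N : ℕ) (i i' i'' : Fin N)
    (hadj : i.val + 1 = i'.val) (hadj' : i'.val + 1 = i''.val)
    -- differentials of `X = F_i ⊗ F_{i+1} ⊗ F_i`:
    (δ₃ : Bq3 K N i i' i' i'' i i' →ₗ[SE K N]
      Bq2 K N i i' i' i'' × Bq2 K N i i' i i' × Bq2 K N i' i'' i i')
    (hδ₃ : ∀ x y z w : Rp K N,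
      δ₃ (x ⊗ₜ (y ⊗ₜ (z ⊗ₜ w))) =
        (x ⊗ₜ (y ⊗ₜ (z * w)), -(x ⊗ₜ ((y * z) ⊗ₜ w)), (x * y) ⊗ₜ (z ⊗ₜ w)))
    (δ₂ : Bq2 K N i i' i' i'' × Bq2 K N i i' i i' × Bq2 K N i' i'' i i' →ₗ[SE K N]
      Bq K N i i' × Bq K N i' i'' × Bq K N i i')
    (hδ₂a : ∀ x y z : Rp K N,
      δ₂ (x ⊗ₜ (y ⊗ₜ z), 0, 0) = (-(x ⊗ₜ (y * z)), (x * y) ⊗ₜ z, 0))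
    (hδ₂b : ∀ x y z : Rp K N,
      δ₂ (0, x ⊗ₜ (y ⊗ₜ z), 0) = (-(x ⊗ₜ (y * z)), 0, (x * y) ⊗ₜ z))
    (hδ₂c : ∀ x y z : Rp K N,
      δ₂ (0, 0, x ⊗ₜ (y ⊗ₜ z)) = (0, -(x ⊗ₜ (y * z)), (x * y) ⊗ₜ z))
    (δ₁ : Bq K N i i' × Bq K N i' i'' × Bq K N i i' →ₗ[SE K N] Rp K N)
    (hδ₁ : ∀ x y z w p q : Rp K N,
      δ₁ (x ⊗ₜ y, z ⊗ₜ w, p ⊗ₜ q) = x * y + z * w + p * q)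
    -- differentials of `Y = F_{i+1} ⊗ F_i ⊗ F_{i+1}`:
    (ε₃ : Bq3 K N i' i'' i i' i' i'' →ₗ[SE K N]
      Bq2 K N i' i'' i i' × Bq2 K N i' i'' i' i'' × Bq2 K N i i' i' i'')
    (hε₃ : ∀ x y z w : Rp K N,
      ε₃ (x ⊗ₜ (y ⊗ₜ (z ⊗ₜ w))) =
        (x ⊗ₜ (y ⊗ₜ (z * w)), -(x ⊗ₜ ((y * z) ⊗ₜ w)), (x * y) ⊗ₜ (z ⊗ₜ w)))
    (ε₂ : Bq2 K N i' i'' i i' × Bq2 K N i' i'' i' i'' × Bq2 K N i i' i' i'' →ₗ[SE K N]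
      Bq K N i' i'' × Bq K N i i' × Bq K N i' i'')
    (hε₂a : ∀ x y z : Rp K N,
      ε₂ (x ⊗ₜ (y ⊗ₜ z), 0, 0) = (-(x ⊗ₜ (y * z)), (x * y) ⊗ₜ z, 0))
    (hε₂b : ∀ x y z : Rp K N,
      ε₂ (0, x ⊗ₜ (y ⊗ₜ z), 0) = (-(x ⊗ₜ (y * z)), 0, (x * y) ⊗ₜ z))
    (hε₂c : ∀ x y z : Rp K N,
      ε₂ (0, 0, x ⊗ₜ (y ⊗ₜ z)) = (0, -(x ⊗ₜ (y * z)), (x * y) ⊗ₜ z))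
    (ε₁ : Bq K N i' i'' × Bq K N i i' × Bq K N i' i'' →ₗ[SE K N] Rp K N)
    (hε₁ : ∀ x y z w p q : Rp K N,
      ε₁ (x ⊗ₜ y, z ⊗ₜ w, p ⊗ₜ q) = x * y + z * w + p * q) :
    -- both are complexes:
    (δ₂ ∘ₗ δ₃ = 0 ∧ δ₁ ∘ₗ δ₂ = 0 ∧ ε₂ ∘ₗ ε₃ = 0 ∧ ε₁ ∘ₗ ε₂ = 0) ∧
    -- and they are homotopy equivalent as complexes of `R`-bimodules:
    ∃ (u₃ : Bq3 K N i i' i' i'' i i' →ₗ[SE K N] Bq3 K N i' i'' i i' i' i'')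
      (u₂ : Bq2 K N i i' i' i'' × Bq2 K N i i' i i' × Bq2 K N i' i'' i i' →ₗ[SE K N]
        Bq2 K N i' i'' i i' × Bq2 K N i' i'' i' i'' × Bq2 K N i i' i' i'')
      (u₁ : Bq K N i i' × Bq K N i' i'' × Bq K N i i' →ₗ[SE K N]
        Bq K N i' i'' × Bq K N i i' × Bq K N i' i'')
      (u₀ : Rp K N →ₗ[SE K N] Rp K N)
      (v₃ : Bq3 K N i' i'' i i' i' i'' →ₗ[SE K N] Bq3 K N i i' i' i'' i i')
      (v₂ : Bq2 K N i' i'' i i' × Bq2 K N i' i'' i' i'' × Bq2 K N i i' i' i'' →ₗ[SE K N]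
        Bq2 K N i i' i' i'' × Bq2 K N i i' i i' × Bq2 K N i' i'' i i')
      (v₁ : Bq K N i' i'' × Bq K N i i' × Bq K N i' i'' →ₗ[SE K N]
        Bq K N i i' × Bq K N i' i'' × Bq K N i i')
      (v₀ : Rp K N →ₗ[SE K N] Rp K N)
      (h₂ : Bq2 K N i i' i' i'' × Bq2 K N i i' i i' × Bq2 K N i' i'' i i' →ₗ[SE K N]
        Bq3 K N i i' i' i'' i i')
      (h₁ : Bq K N i i' × Bq K N i' i'' × Bq K N i i' →ₗ[SE K N]
        Bq2 K N i i' i' i'' × Bq2 K N i i' i i' × Bq2 K N i' i'' i i')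
      (h₀ : Rp K N →ₗ[SE K N] Bq K N i i' × Bq K N i' i'' × Bq K N i i')
      (k₂ : Bq2 K N i' i'' i i' × Bq2 K N i' i'' i' i'' × Bq2 K N i i' i' i'' →ₗ[SE K N]
        Bq3 K N i' i'' i i' i' i'')
      (k₁ : Bq K N i' i'' × Bq K N i i' × Bq K N i' i'' →ₗ[SE K N]
        Bq2 K N i' i'' i i' × Bq2 K N i' i'' i' i'' × Bq2 K N i i' i' i'')
      (k₀ : Rp K N →ₗ[SE K N] Bq K N i' i'' × Bq K N i i' × Bq K N i' i''),
      -- `u` and `v` are chain maps: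
      (u₂ ∘ₗ δ₃ = ε₃ ∘ₗ u₃ ∧ u₁ ∘ₗ δ₂ = ε₂ ∘ₗ u₂ ∧ u₀ ∘ₗ δ₁ = ε₁ ∘ₗ u₁) ∧
      (v₂ ∘ₗ ε₃ = δ₃ ∘ₗ v₃ ∧ v₁ ∘ₗ ε₂ = δ₂ ∘ₗ v₂ ∧ v₀ ∘ₗ ε₁ = δ₁ ∘ₗ v₁) ∧
      -- `v ∘ u` is homotopic to the identity (via `h`):
      (v₃ ∘ₗ u₃ + h₂ ∘ₗ δ₃ = LinearMap.id ∧
       v₂ ∘ₗ u₂ + δ₃ ∘ₗ h₂ + h₁ ∘ₗ δ₂ = LinearMap.id ∧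
       v₁ ∘ₗ u₁ + δ₂ ∘ₗ h₁ + h₀ ∘ₗ δ₁ = LinearMap.id ∧
       v₀ ∘ₗ u₀ + δ₁ ∘ₗ h₀ = LinearMap.id) ∧
      -- `u ∘ v` is homotopic to the identity (via `k`):
      (u₃ ∘ₗ v₃ + k₂ ∘ₗ ε₃ = LinearMap.id ∧
       u₂ ∘ₗ v₂ + ε₃ ∘ₗ k₂ + k₁ ∘ₗ ε₂ = LinearMap.id ∧
       u₁ ∘ₗ v₁ + ε₂ ∘ₗ k₁ + k₀ ∘ₗ ε₁ = LinearMap.id ∧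
       u₀ ∘ₗ v₀ + ε₁ ∘ₗ k₀ = LinearMap.id) := by
  have hij : i < i' := Fin.lt_def.2 (hadj ▸ Nat.lt_succ_self _)
  have hjk : i' < i'' := Fin.lt_def.2 (hadj' ▸ Nat.lt_succ_self _)
  have hδ : Rouquier.IsRouquierDifferential δ₃ δ₂ δ₁ := ⟨hδ₃, hδ₂a, hδ₂b, hδ₂c, hδ₁⟩
  have hε : Rouquier.IsRouquierDifferential ε₃ ε₂ ε₁ := ⟨hε₃, hε₂a, hε₂b, hε₂c, hε₁⟩
  exact rouquier_complexes_satisfy_braid_relation_general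
    (Rouquier.isBraidPair_rename_swap K hij.ne hjk.ne (hij.trans hjk).ne) hδ hε
end

section
/- Let K be a field of characteristic 0, R a commutative K-algebra, and let M and N be R-bimodules (modules over R ⊗_K R) such that M is finitely generated projective both as a left R-module and as a right R-module, and N is finitely generated projective both as a left R-module and as a right R-module. Then for every n ≥ 0 there is an isomorphism of Hochschild homology groups HH_n(R, M ⊗_R N) ≅ HH_n(R, N ⊗_R M), where HH_n(R, −) = Tor_n^{R ⊗_K R}(R, −). This trace property is the algebraic source of the conjugation invariance of the triply-graded link homology. -/
set_option synthInstance.maxHeartbeats 1000000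
set_option maxHeartbeats 1000000

/-!
STATEMENT 15: the trace property of Hochschild homology
`HH_n(R, M ⊗_R N) ≅ HH_n(R, N ⊗_R M)`, where `HH_n(R, -) = Tor_n^{R ⊗_K R}(R, -)`,
for `R`-bimodules `M`, `N` (i.e. modules over `R ⊗_K R`) that are finitely
generated projective as left and as right `R`-modules.  The bimodule tensor
products `M ⊗_R N` and `N ⊗_R M` are encoded by their universal property.
-/

open TensorProduct CategoryTheory

universe u

/-!
Both groups are `Tor_n^{R ⊗ R}(N, M)`, where the two actions on `N` are exchanged. The functor
`- ⊗_R N` on bimodules is exact as `N` is flat on the left, and it preserves projectives since its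
right adjoint `Hom_R(N, -)` preserves epimorphisms, `N` being projective on the right. As
`R ⊗_{R ⊗ R} (X ⊗_R N) ≅ N ⊗_{R ⊗ R} X` naturally in `X`, deriving both sides gives
`HH_n(R, M ⊗_R N) ≅ Tor_n^{R ⊗ R}(N, M)`. Exchanging left and right actions turns `N ⊗_R M` into a
tensor product in the order `M`, `N`, so the same argument applies to it.
-/

universe v

noncomputable section

section LeftDerived

universe v₁ v₂ v₃ u₁ u₂ u₃

variable {C : Type u₁} [Category.{v₁} C] [Abelian C] [HasProjectiveResolutions C]
  {D : Type u₂} [Category.{v₂} D] [Abelian D] {E : Type u₃} [Category.{v₃} E] [Abelian E]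

/-- The degenerate Grothendieck spectral sequence `L_n(G ∘ F) ≅ L_n G ∘ F`, for `F` exact and
preserving projective objects. -/
def leftDerivedPrecompExactIso [HasProjectiveResolutions D] (F : C ⥤ D) [F.Additive]
    [F.PreservesHomology] [F.PreservesProjectiveObjects] (G : D ⥤ E) [G.Additive]
    (n : ℕ) (Z : C) :
    ((F ⋙ G).leftDerived n).obj Z ≅ (G.leftDerived n).obj (F.obj Z) :=
  (projectiveResolution Z).isoLeftDerivedObj (F ⋙ G) n ≪≫
    ((F.mapProjectiveResolution (projectiveResolution Z)).isoLeftDerivedObj G n).symm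

/-- Postcomposition with an exact functor `H` commutes with left derivation:
`L_n(H ∘ G) ≅ H ∘ L_n G`. -/
def leftDerivedPostcompExactIso (G : C ⥤ D) [G.Additive] (H : D ⥤ E) [H.Additive]
    [H.PreservesHomology] (n : ℕ) (Z : C) :
    ((G ⋙ H).leftDerived n).obj Z ≅ H.obj ((G.leftDerived n).obj Z) :=
  (projectiveResolution Z).isoLeftDerivedObj (G ⋙ H) n ≪≫
    ((HomologicalComplex.sc ((G.mapHomologicalComplex _).obj
      (projectiveResolution Z).complex) n).mapHomologyIso H) ≪≫
    H.mapIso ((projectiveResolution Z).isoLeftDerivedObj G n).symm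

/-- Left derived functors are invariant under isomorphism of functors. -/
def leftDerivedIsoOfNatIso {G G' : C ⥤ D} [G.Additive] [G'.Additive] (e : G ≅ G') (n : ℕ) :
    G.leftDerived n ≅ G'.leftDerived n where
  hom := NatTrans.leftDerived e.hom n
  inv := NatTrans.leftDerived e.inv n
  hom_inv_id := by rw [← NatTrans.leftDerived_comp, e.hom_inv_id, NatTrans.leftDerived_id]
  inv_hom_id := by rw [← NatTrans.leftDerived_comp, e.inv_hom_id, NatTrans.leftDerived_id]

end LeftDerived

lemma addMonoidHom_ext_tmul {S M N G : Type*} [CommRing S] [AddCommGroup M] [Module S M]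
    [AddCommGroup N] [Module S N] [AddCommGroup G] {f g : M ⊗[S] N →+ G}
    (h : ∀ x y, f (x ⊗ₜ[S] y) = g (x ⊗ₜ[S] y)) : f = g :=
  AddMonoidHom.ext fun t => t.induction_on (by rw [map_zero, map_zero]) h
    fun s t hs ht => by rw [map_add, map_add, hs, ht]

section Tor

variable {S T : Type u} [CommRing S] [CommRing T]

/-- The functor `U ⊗_S -` with values in abelian groups, so that such functors over different
rings can be compared. -/
abbrev tensorLeftAb (U : ModuleCat.{u} S) : ModuleCat.{u} S ⥤ AddCommGrpCat.{u} :=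
  (MonoidalCategory.tensoringLeft (ModuleCat.{u} S)).obj U ⋙
    forget₂ (ModuleCat.{u} S) AddCommGrpCat.{u}

lemma tensorLeftAb_hom_ext {U Z : ModuleCat.{u} S} {G : AddCommGrpCat.{u}}
    {f g : (tensorLeftAb U).obj Z ⟶ G}
    (h : ∀ (u : U) (z : Z), f.hom (u ⊗ₜ[S] z : U ⊗[S] Z) = g.hom (u ⊗ₜ[S] z : U ⊗[S] Z)) :
    f = g :=
  AddCommGrpCat.hom_ext (addMonoidHom_ext_tmul h)

/-- Change of rings for `Tor` along an exact functor `F` preserving projectives, reduced to an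
isomorphism `U ⊗_S Z ≅ V ⊗_T F Z` natural in `Z`. -/
def torEquivOfTensorLeftAbIso (F : ModuleCat.{u} S ⥤ ModuleCat.{u} T) [F.Additive]
    [F.PreservesHomology] [F.PreservesProjectiveObjects] {U : ModuleCat.{u} S}
    {V : ModuleCat.{u} T} (e : tensorLeftAb U ≅ F ⋙ tensorLeftAb V) (n : ℕ)
    (Z : ModuleCat.{u} S) :
    ((Tor (ModuleCat.{u} S) n).obj U).obj Z ≃+
      ((Tor (ModuleCat.{u} T) n).obj V).obj (F.obj Z) :=
  ((leftDerivedPostcompExactIso _ _ n Z).symm ≪≫ (leftDerivedIsoOfNatIso e n).app Z ≪≫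
    leftDerivedPrecompExactIso F (tensorLeftAb V) n Z ≪≫
    leftDerivedPostcompExactIso _ _ n (F.obj Z)).addCommGroupIsoToAddEquiv

/-- Tensor products over isomorphic rings agree. -/
def tensorRestrictScalarsEquiv (e : S ≃+* T) (U Z : ModuleCat.{u} T) :
    U ⊗[T] Z ≃+ (ModuleCat.restrictScalars e.toRingHom).obj U ⊗[S]
      (ModuleCat.restrictScalars e.toRingHom).obj Z :=
  letI : Algebra S T := e.toRingHom.toAlgebra
  letI : Module S U := Module.compHom U e.toRingHom
  letI : Module S Z := Module.compHom Z e.toRingHom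
  haveI : IsScalarTower S T U := .of_compHom ..
  haveI : IsScalarTower S T Z := .of_compHom ..
  haveI : TensorProduct.CompatibleSMul S T U Z := ⟨fun t u z => by
    obtain ⟨s, rfl⟩ := e.surjective t
    exact TensorProduct.smul_tmul (R := S) s u z⟩
  (TensorProduct.equivOfCompatibleSMul S T S U Z).toAddEquiv

/-- `tensorRestrictScalarsEquiv`, as an isomorphism of functors of the second factor. -/
def tensorLeftAbRestrictScalarsIso (e : S ≃+* T) (U : ModuleCat.{u} T) :
    tensorLeftAb U ≅ ModuleCat.restrictScalars e.toRingHom ⋙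
      tensorLeftAb ((ModuleCat.restrictScalars e.toRingHom).obj U) :=
  NatIso.ofComponents (fun Z => (tensorRestrictScalarsEquiv e U Z).toAddCommGrpIso)
    fun _ => tensorLeftAb_hom_ext fun _ _ => rfl

/-- `Tor` is invariant under ring isomorphisms. -/
def torRestrictScalarsEquiv (e : S ≃+* T) (n : ℕ) (U Z : ModuleCat.{u} T) :
    ((Tor (ModuleCat.{u} T) n).obj U).obj Z ≃+
      ((Tor (ModuleCat.{u} S) n).obj ((ModuleCat.restrictScalars e.toRingHom).obj U)).obj
        ((ModuleCat.restrictScalars e.toRingHom).obj Z) :=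
  haveI := ModuleCat.restrictScalars_isEquivalence_of_ringEquiv e
  torEquivOfTensorLeftAbIso (ModuleCat.restrictScalars e.toRingHom)
    (tensorLeftAbRestrictScalarsIso e U) n Z

end Tor

section Bimodule

variable {K : Type v} {A B C : Type u} [CommRing K] [CommRing A] [Algebra K A] [CommRing B]
  [Algebra K B] [CommRing C] [Algebra K C]

section Basic

lemma tmul_one_smul_one_tmul_smul {M : Type*} [AddCommGroup M] [Module (A ⊗[K] B) M] (a : A)
    (b : B) (x : M) : (a ⊗ₜ[K] (1 : B)) • ((1 : A) ⊗ₜ[K] b) • x = (a ⊗ₜ[K] b) • x := by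
  rw [smul_smul, Algebra.TensorProduct.tmul_mul_tmul, mul_one, one_mul]

/-- Linearity over `A ⊗_K B` need only be checked for pure tensors. -/
def linearMapOfTMulSMul {M P : Type*} [AddCommGroup M] [Module (A ⊗[K] B) M] [AddCommGroup P]
    [Module (A ⊗[K] B) P] (f : M →+ P)
    (hf : ∀ (a : A) (b : B) x, f ((a ⊗ₜ[K] b) • x) = (a ⊗ₜ[K] b) • f x) : M →ₗ[A ⊗[K] B] P where
  __ := f
  map_smul' s x := by
    change f (s • x) = s • f x
    induction s with
    | zero => rw [zero_smul, zero_smul, map_zero]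
    | add s t hs ht => rw [add_smul, add_smul, map_add, hs, ht]
    | tmul a b => exact hf a b x

/-- Commuting actions of `A` and `B` which agree on `K` form an action of `A ⊗_K B`. -/
abbrev moduleOfSMulComm (M : Type*) [AddCommGroup M] [Module A M] [Module B M]
    [SMulCommClass A B M] (h : ∀ (k : K) (x : M), algebraMap K A k • x = algebraMap K B k • x) :
    Module (A ⊗[K] B) M :=
  letI : Module K M := .compHom M (algebraMap K A)
  haveI : IsScalarTower K A M := .of_compHom ..
  haveI : IsScalarTower K B M := ⟨fun k b x => by
    rw [Algebra.smul_def, mul_smul, ← h]; rfl⟩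
  TensorProduct.Algebra.module

/-- The left action on an `A`-`B`-bimodule. -/
abbrev bimoduleLeftModule (X : ModuleCat.{u} (A ⊗[K] B)) : Module A X :=
  .compHom X (algebraMap A (A ⊗[K] B))

/-- The right action on an `A`-`B`-bimodule, as a left action of the commutative ring `B`. -/
abbrev bimoduleRightModule (X : ModuleCat.{u} (A ⊗[K] B)) : Module B X :=
  .compHom X (Algebra.TensorProduct.includeRight (R := K) (A := A) (B := B)).toRingHom

end Basic

section Pairing

variable (K A B C) in
/-- `φ : M → N → P` is a pairing of an `A`-`B`-bimodule and a `B`-`C`-bimodule with values in an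
`A`-`C`-bimodule: it is biadditive, `B`-balanced and compatible with the outer actions. -/
structure IsBimodulePairing {M N P : Type*} [AddCommGroup M] [Module (A ⊗[K] B) M]
    [AddCommGroup N] [Module (B ⊗[K] C) N] [AddCommGroup P] [Module (A ⊗[K] C) P]
    (φ : M → N → P) : Prop where
  map_add_left : ∀ x x' y, φ (x + x') y = φ x y + φ x' y
  map_add_right : ∀ x y y', φ x (y + y') = φ x y + φ x y'
  map_smul_left : ∀ (a : A) x y, φ ((a ⊗ₜ[K] (1 : B)) • x) y = (a ⊗ₜ[K] (1 : C)) • φ x y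
  map_smul_right : ∀ (c : C) x y, φ x (((1 : B) ⊗ₜ[K] c) • y) = ((1 : A) ⊗ₜ[K] c) • φ x y
  map_smul_middle : ∀ (b : B) x y,
    φ (((1 : A) ⊗ₜ[K] b) • x) y = φ x ((b ⊗ₜ[K] (1 : C)) • y)

variable (K A B C) in
/-- The pairing `φ` exhibits `P` as the bimodule tensor product `M ⊗_B N`, as it is universal among
bimodule pairings. -/
structure IsBimoduleTensor {M N P : Type u} [AddCommGroup M] [Module (A ⊗[K] B) M]
    [AddCommGroup N] [Module (B ⊗[K] C) N] [AddCommGroup P] [Module (A ⊗[K] C) P]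
    (φ : M → N → P) : Prop extends IsBimodulePairing K A B C φ where
  existsUnique_linearMap : ∀ (Q : Type u) [AddCommGroup Q] [Module (A ⊗[K] C) Q] (ψ : M → N → Q),
    IsBimodulePairing K A B C ψ → ∃! g : P →ₗ[A ⊗[K] C] Q, ∀ x y, g (φ x y) = ψ x y

lemma IsBimodulePairing.comp_linearMap {M M' N P : Type*} [AddCommGroup M]
    [Module (A ⊗[K] B) M] [AddCommGroup M'] [Module (A ⊗[K] B) M'] [AddCommGroup N]
    [Module (B ⊗[K] C) N] [AddCommGroup P] [Module (A ⊗[K] C) P] {φ : M → N → P}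
    (hφ : IsBimodulePairing K A B C φ) (f : M' →ₗ[A ⊗[K] B] M) :
    IsBimodulePairing K A B C fun x y => φ (f x) y where
  map_add_left x x' y := by rw [map_add, hφ.map_add_left]
  map_add_right x y y' := hφ.map_add_right (f x) y y'
  map_smul_left a x y := by rw [map_smul, hφ.map_smul_left]
  map_smul_right c x y := hφ.map_smul_right c (f x) y
  map_smul_middle b x y := by rw [map_smul, hφ.map_smul_middle]

lemma IsBimodulePairing.linearMap_comp {M N P P' : Type*} [AddCommGroup M]
    [Module (A ⊗[K] B) M] [AddCommGroup N] [Module (B ⊗[K] C) N] [AddCommGroup P]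
    [Module (A ⊗[K] C) P] [AddCommGroup P'] [Module (A ⊗[K] C) P'] {φ : M → N → P}
    (hφ : IsBimodulePairing K A B C φ) (g : P →ₗ[A ⊗[K] C] P') :
    IsBimodulePairing K A B C fun x y => g (φ x y) where
  map_add_left x x' y := by rw [hφ.map_add_left, map_add]
  map_add_right x y y' := by rw [hφ.map_add_right, map_add]
  map_smul_left a x y := by rw [hφ.map_smul_left, map_smul]
  map_smul_right c x y := by rw [hφ.map_smul_right, map_smul]
  map_smul_middle b x y := congrArg g (hφ.map_smul_middle b x y)

lemma IsBimodulePairing.map_smul_smul {M N P : Type*} [AddCommGroup M] [Module (A ⊗[K] B) M]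
    [AddCommGroup N] [Module (B ⊗[K] C) N] [AddCommGroup P] [Module (A ⊗[K] C) P]
    {φ : M → N → P} (hφ : IsBimodulePairing K A B C φ) (a : A) (c : C) (x : M)
    (y : N) :
    φ ((a ⊗ₜ[K] (1 : B)) • x) (((1 : B) ⊗ₜ[K] c) • y) = (a ⊗ₜ[K] c) • φ x y := by
  rw [hφ.map_smul_left, hφ.map_smul_right, tmul_one_smul_one_tmul_smul]

variable {M N P : Type u} [AddCommGroup M] [Module (A ⊗[K] B) M] [AddCommGroup N]
  [Module (B ⊗[K] C) N] [AddCommGroup P] [Module (A ⊗[K] C) P] {φ : M → N → P}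

lemma IsBimoduleTensor.nonempty_linearEquiv {P' : Type u} [AddCommGroup P']
    [Module (A ⊗[K] C) P'] {φ' : M → N → P'} (hφ : IsBimoduleTensor K A B C φ)
    (hφ' : IsBimoduleTensor K A B C φ') : Nonempty (P ≃ₗ[A ⊗[K] C] P') := by
  obtain ⟨f, hf, -⟩ := hφ.existsUnique_linearMap P' φ' hφ'.toIsBimodulePairing
  obtain ⟨g, hg, -⟩ := hφ'.existsUnique_linearMap P φ hφ.toIsBimodulePairing
  have hfg : f ∘ₗ g = LinearMap.id :=
    (hφ'.existsUnique_linearMap P' φ' hφ'.toIsBimodulePairing).unique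
      (fun x y => (congrArg f (hg x y)).trans (hf x y)) fun _ _ => rfl
  have hgf : g ∘ₗ f = LinearMap.id :=
    (hφ.existsUnique_linearMap P φ hφ.toIsBimodulePairing).unique
      (fun x y => (congrArg g (hf x y)).trans (hg x y)) fun _ _ => rfl
  exact ⟨.ofLinearMap f g hfg hgf⟩

end Pairing

attribute [local instance] bimoduleLeftModule bimoduleRightModule

instance smulCommClass_left_right (X : ModuleCat.{u} (A ⊗[K] B)) : SMulCommClass A B X where
  smul_comm a b x := smul_comm (a ⊗ₜ[K] (1 : B)) ((1 : A) ⊗ₜ[K] b) x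

instance smulCommClass_right_left (X : ModuleCat.{u} (A ⊗[K] B)) : SMulCommClass B A X :=
  SMulCommClass.symm _ _ _

lemma algebraMap_left_smul_eq_right (X : ModuleCat.{u} (A ⊗[K] B)) (k : K) (x : X) :
    algebraMap K A k • x = algebraMap K B k • x :=
  congrArg (fun s : A ⊗[K] B => s • x) (Algebra.TensorProduct.tmul_one_eq_one_tmul k)

/-- The tensor product `X ⊗_B N` of an `A`-`B`-bimodule and a `B`-`C`-bimodule. -/
def BimoduleTensor (X : ModuleCat.{u} (A ⊗[K] B)) (N : ModuleCat.{u} (B ⊗[K] C)) : Type u :=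
  X ⊗[B] N

namespace BimoduleTensor

variable {X : ModuleCat.{u} (A ⊗[K] B)} {N : ModuleCat.{u} (B ⊗[K] C)}

instance : AddCommGroup (BimoduleTensor X N) := inferInstanceAs (AddCommGroup (X ⊗[B] N))

instance : Module (A ⊗[K] C) (BimoduleTensor X N) :=
  letI : Module C (X ⊗[B] N) := .compHom _ ((Module.End.lTensorAlgHom B N X).toRingHom.comp
    (Module.toModuleEnd B (S := C) N))
  haveI : SMulCommClass A C (X ⊗[B] N) := ⟨fun a c t => by
    induction t with
    | zero => simp only [smul_zero]
    | add s t hs ht => simp only [smul_add, hs, ht]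
    | tmul x n => rfl⟩
  moduleOfSMulComm (X ⊗[B] N) fun k t => by
    induction t with
    | zero => simp only [smul_zero]
    | add s t hs ht => simp only [smul_add, hs, ht]
    | tmul x n => calc
        (algebraMap K A k • x) ⊗ₜ[B] n = (algebraMap K B k • x) ⊗ₜ[B] n := by
          rw [algebraMap_left_smul_eq_right]
        _ = x ⊗ₜ[B] (algebraMap K C k • n) := by
          rw [TensorProduct.smul_tmul, algebraMap_left_smul_eq_right]

/-- The pure tensor `x ⊗ n`. -/
def tmul (x : X) (n : N) : BimoduleTensor X N := x ⊗ₜ[B] n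

lemma induction_on {p : BimoduleTensor X N → Prop} (t : BimoduleTensor X N) (zero : p 0)
    (tmul : ∀ x n, p (tmul x n)) (add : ∀ s t, p s → p t → p (s + t)) : p t :=
  TensorProduct.induction_on t zero tmul add

lemma smul_tmul (a : A) (c : C) (x : X) (n : N) :
    (a ⊗ₜ[K] c) • tmul x n = tmul ((a ⊗ₜ[K] (1 : B)) • x) (((1 : B) ⊗ₜ[K] c) • n) := rfl

lemma isBimodulePairing_tmul :
    IsBimodulePairing K A B C (tmul : X → N → BimoduleTensor X N) where
  map_add_left := TensorProduct.add_tmul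
  map_add_right := TensorProduct.tmul_add
  map_smul_left a x n := by rw [smul_tmul, ← Algebra.TensorProduct.one_def, one_smul]
  map_smul_right c x n := by rw [smul_tmul, ← Algebra.TensorProduct.one_def, one_smul]
  map_smul_middle := TensorProduct.smul_tmul

/-- The linear map on `X ⊗_B N` induced by a bimodule pairing. -/
def lift {P : Type*} [AddCommGroup P] [Module (A ⊗[K] C) P] {φ : X → N → P}
    (hφ : IsBimodulePairing K A B C φ) : BimoduleTensor X N →ₗ[A ⊗[K] C] P :=
  let f : BimoduleTensor X N →+ P := TensorProduct.liftAddHom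
    (.mk' (fun x => .mk' (φ x) (hφ.map_add_right x))
      fun x x' => AddMonoidHom.ext (hφ.map_add_left x x')) hφ.map_smul_middle
  linearMapOfTMulSMul f fun a c t => by
    induction t using induction_on with
    | zero => simp only [smul_zero, map_zero]
    | add s t hs ht => simp only [smul_add, map_add, hs, ht]
    | tmul x n => exact hφ.map_smul_smul a c x n

lemma lift_tmul {P : Type*} [AddCommGroup P] [Module (A ⊗[K] C) P] {φ : X → N → P}
    (hφ : IsBimodulePairing K A B C φ) (x : X) (n : N) : lift hφ (tmul x n) = φ x n := rfl

lemma addHom_ext {P : Type*} [AddCommGroup P] {f g : BimoduleTensor X N →+ P}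
    (h : ∀ x n, f (tmul x n) = g (tmul x n)) : f = g := addMonoidHom_ext_tmul h

lemma linearMap_ext {P : Type*} [AddCommGroup P] [Module (A ⊗[K] C) P]
    {f g : BimoduleTensor X N →ₗ[A ⊗[K] C] P} (h : ∀ x n, f (tmul x n) = g (tmul x n)) : f = g :=
  LinearMap.toAddMonoidHom_injective (addHom_ext h)

lemma isBimoduleTensor_tmul :
    IsBimoduleTensor K A B C (tmul : X → N → BimoduleTensor X N) where
  toIsBimodulePairing := isBimodulePairing_tmul
  existsUnique_linearMap _ _ _ _ hψ := ⟨lift hψ, lift_tmul hψ, fun _ hg =>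
    linearMap_ext fun x n => (hg x n).trans (lift_tmul hψ x n).symm⟩

end BimoduleTensor

section TensorFunctor

variable {X Y : ModuleCat.{u} (A ⊗[K] B)}

/-- The underlying right-linear map of a homomorphism of `A`-`B`-bimodules. -/
def linearMapRight (f : X →ₗ[A ⊗[K] B] Y) : X →ₗ[B] Y :=
  { f with map_smul' := fun b => f.map_smul ((1 : A) ⊗ₜ[K] b) }

/-- The functor `- ⊗_B N` from `A`-`B`-bimodules to `A`-`C`-bimodules. -/
def tensorFunctor (N : ModuleCat.{u} (B ⊗[K] C)) :
    ModuleCat.{u} (A ⊗[K] B) ⥤ ModuleCat.{u} (A ⊗[K] C) where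
  obj X := .of _ (BimoduleTensor X N)
  map f := ModuleCat.ofHom
    (BimoduleTensor.lift (BimoduleTensor.isBimodulePairing_tmul.comp_linearMap f.hom))
  map_id _ := ModuleCat.hom_ext (BimoduleTensor.linearMap_ext fun _ _ => rfl)
  map_comp _ _ := ModuleCat.hom_ext (BimoduleTensor.linearMap_ext fun _ _ => rfl)

lemma coe_tensorFunctor_map (N : ModuleCat.{u} (B ⊗[K] C)) (f : X ⟶ Y) :
    ⇑((tensorFunctor N).map f).hom = ⇑((linearMapRight f.hom).rTensor N) :=
  congrArg DFunLike.coe (BimoduleTensor.addHom_ext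
    (f := ((tensorFunctor N).map f).hom.toAddMonoidHom)
    (g := ((linearMapRight f.hom).rTensor N).toAddMonoidHom) fun _ _ => rfl)

instance (N : ModuleCat.{u} (B ⊗[K] C)) : (tensorFunctor (A := A) N).Additive where
  map_add := ModuleCat.hom_ext
    (BimoduleTensor.linearMap_ext fun _ _ => BimoduleTensor.isBimodulePairing_tmul.map_add_left ..)

instance (N : ModuleCat.{u} (B ⊗[K] C)) [Module.Flat B N] :
    (tensorFunctor (A := A) N).PreservesHomology :=
  (tensorFunctor N).preservesHomology_of_map_exact fun S hS => by
    rw [ShortComplex.ShortExact.moduleCat_exact_iff_function_exact] at hS ⊢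
    change Function.Exact ⇑((tensorFunctor N).map S.f).hom ⇑((tensorFunctor N).map S.g).hom
    rw [coe_tensorFunctor_map, coe_tensorFunctor_map]
    exact Module.Flat.rTensor_exact N (f := linearMapRight S.f.hom)
      (g := linearMapRight S.g.hom) hS

end TensorFunctor

/-- The `A`-`B`-bimodule `Hom_C(N, Y)`, for a `B`-`C`-bimodule `N` and an `A`-`C`-bimodule `Y`. -/
def BimoduleHom (N : ModuleCat.{u} (B ⊗[K] C)) (Y : ModuleCat.{u} (A ⊗[K] C)) : Type u :=
  N →ₗ[C] Y

namespace BimoduleHom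

variable {N : ModuleCat.{u} (B ⊗[K] C)} {Y : ModuleCat.{u} (A ⊗[K] C)}

instance : AddCommGroup (BimoduleHom N Y) := inferInstanceAs (AddCommGroup (N →ₗ[C] Y))

instance : FunLike (BimoduleHom N Y) N Y := inferInstanceAs (FunLike (N →ₗ[C] Y) N Y)

instance : Module (A ⊗[K] B) (BimoduleHom N Y) :=
  letI : Module B (N →ₗ[C] Y) :=
    .compHom (N →ₗ[C] Y) (show B →+* Bᵈᵐᵃ from (RingEquiv.toOpposite B).toRingHom)
  haveI : SMulCommClass A B (N →ₗ[C] Y) := ⟨fun _ _ _ => rfl⟩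
  moduleOfSMulComm (N →ₗ[C] Y) fun k f => LinearMap.ext fun n => calc
    algebraMap K A k • f n = algebraMap K C k • f n := algebraMap_left_smul_eq_right Y k (f n)
    _ = f (algebraMap K B k • n) := by rw [algebraMap_left_smul_eq_right, map_smul]

lemma smul_apply (a : A) (b : B) (f : BimoduleHom N Y) (n : N) :
    ((a ⊗ₜ[K] b) • f) n = (a ⊗ₜ[K] (1 : C)) • f ((b ⊗ₜ[K] (1 : C)) • n) := rfl

lemma isBimodulePairing_apply :
    IsBimodulePairing K A B C fun (f : BimoduleHom N Y) n => f n where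
  map_add_left _ _ _ := rfl
  map_add_right f := LinearMap.map_add f
  map_smul_left a f n := by rw [smul_apply, ← Algebra.TensorProduct.one_def, one_smul]
  map_smul_right c f n := LinearMap.map_smul f c n
  map_smul_middle b f n := by rw [smul_apply, ← Algebra.TensorProduct.one_def, one_smul]

/-- The homomorphism to `Hom_C(N, Y)` corresponding to a bimodule pairing. -/
def curry {M : Type*} [AddCommGroup M] [Module (A ⊗[K] B) M] {φ : M → N → Y}
    (hφ : IsBimodulePairing K A B C φ) : M →ₗ[A ⊗[K] B] BimoduleHom N Y :=
  linearMapOfTMulSMul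
    (.mk' (fun x => ({ toFun := φ x
                       map_add' := hφ.map_add_right x
                       map_smul' := fun c => hφ.map_smul_right c x } : N →ₗ[C] Y))
      fun x x' => LinearMap.ext (hφ.map_add_left x x'))
    fun a b x => LinearMap.ext fun n => calc
      φ ((a ⊗ₜ[K] b) • x) n = (a ⊗ₜ[K] (1 : C)) • φ (((1 : A) ⊗ₜ[K] b) • x) n := by
        rw [← hφ.map_smul_left, tmul_one_smul_one_tmul_smul]
      _ = (a ⊗ₜ[K] (1 : C)) • φ x ((b ⊗ₜ[K] (1 : C)) • n) := by rw [hφ.map_smul_middle]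

end BimoduleHom

/-- The functor `Hom_C(N, -)` from `A`-`C`-bimodules to `A`-`B`-bimodules. -/
def homFunctor (N : ModuleCat.{u} (B ⊗[K] C)) :
    ModuleCat.{u} (A ⊗[K] C) ⥤ ModuleCat.{u} (A ⊗[K] B) where
  obj Y := .of _ (BimoduleHom N Y)
  map g := ModuleCat.ofHom
    (BimoduleHom.curry (BimoduleHom.isBimodulePairing_apply.linearMap_comp g.hom))

instance (N : ModuleCat.{u} (B ⊗[K] C)) [Module.Projective C N] :
    (homFunctor (A := A) N).PreservesEpimorphisms where
  preserves {Y Z} g hg := (ModuleCat.epi_iff_surjective _).mpr fun f => by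
    obtain ⟨f', hf'⟩ := Module.projective_lifting_property (linearMapRight g.hom)
      (show N →ₗ[C] Z from f) ((ModuleCat.epi_iff_surjective g).mp hg)
    exact ⟨f', hf'⟩

/-- The adjunction `- ⊗_B N ⊣ Hom_C(N, -)` between categories of bimodules. -/
def tensorHomAdjunction (N : ModuleCat.{u} (B ⊗[K] C)) :
    tensorFunctor (A := A) N ⊣ homFunctor N :=
  .mkOfHomEquiv
    { homEquiv _ _ :=
        { toFun g := ModuleCat.ofHom (BimoduleHom.curry
            (BimoduleTensor.isBimodulePairing_tmul.linearMap_comp g.hom))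
          invFun h := ModuleCat.ofHom (BimoduleTensor.lift
            (BimoduleHom.isBimodulePairing_apply.comp_linearMap h.hom))
          left_inv _ := ModuleCat.hom_ext (BimoduleTensor.linearMap_ext fun _ _ => rfl)
          right_inv _ := rfl }
      homEquiv_naturality_left_symm _ _ :=
        ModuleCat.hom_ext (BimoduleTensor.linearMap_ext fun _ _ => rfl)
      homEquiv_naturality_right _ _ := rfl }

instance (N : ModuleCat.{u} (B ⊗[K] C)) [Module.Projective C N] :
    (tensorFunctor (A := A) N).PreservesProjectiveObjects :=
  Functor.preservesProjectiveObjects_of_adjunction_of_preservesEpimorphisms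
    (tensorHomAdjunction N)

section Trace

/-- The functor regarding an `A`-`B`-bimodule as a `B`-`A`-bimodule. -/
def swapFunctor : ModuleCat.{u} (A ⊗[K] B) ⥤ ModuleCat.{u} (B ⊗[K] A) :=
  ModuleCat.restrictScalars (Algebra.TensorProduct.comm K B A).toRingEquiv.toRingHom

variable (K A) in
/-- The algebra `A` as a bimodule over itself. -/
def regularBimodule : ModuleCat.{u} (A ⊗[K] A) :=
  letI : Module (A ⊗[K] A) A := (Algebra.TensorProduct.lmul' K (S := A)).toRingHom.toModule
  ModuleCat.of (A ⊗[K] A) A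

/-- An element of `A`, regarded as an element of the regular bimodule. -/
def regularBimodule.mk (a : A) : regularBimodule K A := a

lemma regularBimodule.smul_mk (s : A ⊗[K] A) (a : A) :
    s • mk (K := K) a = mk (Algebra.TensorProduct.lmul' K s * a) := rfl

variable (K A) in
/-- Hochschild homology `HH_n(A, P)` with coefficients in an `A`-bimodule `P`. -/
abbrev hochschildHomology (n : ℕ) (P : ModuleCat.{u} (A ⊗[K] A)) : ModuleCat.{u} (A ⊗[K] A) :=
  ((Tor (ModuleCat.{u} (A ⊗[K] A)) n).obj (regularBimodule K A)).obj P

lemma map_smul_eq_of_tmul {M N G : Type*} [AddCommGroup M] [Module (A ⊗[K] B) M] [AddCommGroup N]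
    [Module (A ⊗[K] B) N] [AddCommGroup G] (f : M →+ N →+ G)
    (hf : ∀ (a : A) (b : B) x y, f ((a ⊗ₜ[K] b) • x) y = f x ((a ⊗ₜ[K] b) • y)) (s : A ⊗[K] B)
    (x : M) (y : N) : f (s • x) y = f x (s • y) := by
  induction s with
  | zero => rw [zero_smul, zero_smul, map_zero, map_zero, AddMonoidHom.zero_apply]
  | add s t hs ht => rw [add_smul, add_smul, map_add, map_add, AddMonoidHom.add_apply, hs, ht]
  | tmul a b => exact hf a b x y

variable (X : ModuleCat.{u} (A ⊗[K] B)) (N : ModuleCat.{u} (B ⊗[K] A))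

/-- The cyclic tensor product `A ⊗_{A ⊗ A} (X ⊗_B N)`, that is, `HH_0(A, X ⊗_B N)`. -/
abbrev CyclicTensor : Type u := regularBimodule K A ⊗[A ⊗[K] A] BimoduleTensor X N

variable {X N}

namespace CyclicTensor

/-- The pure tensor `a ⊗ (x ⊗ n)`. -/
def tmul (a : A) (x : X) (n : N) : CyclicTensor X N :=
  regularBimodule.mk a ⊗ₜ[A ⊗[K] A] BimoduleTensor.tmul x n

lemma tmul_smul_left (a a' : A) (x : X) (n : N) :
    tmul a ((a' ⊗ₜ[K] (1 : B)) • x) n = tmul (a' * a) x n := by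
  unfold tmul
  rw [BimoduleTensor.isBimodulePairing_tmul.map_smul_left, ← TensorProduct.smul_tmul,
    regularBimodule.smul_mk, Algebra.TensorProduct.lmul'_apply_tmul, mul_one]

lemma tmul_smul_right (a a' : A) (x : X) (n : N) :
    tmul a x (((1 : B) ⊗ₜ[K] a') • n) = tmul (a' * a) x n := by
  unfold tmul
  rw [BimoduleTensor.isBimodulePairing_tmul.map_smul_right, ← TensorProduct.smul_tmul,
    regularBimodule.smul_mk, Algebra.TensorProduct.lmul'_apply_tmul, one_mul]

lemma tmul_smul_middle (a : A) (b : B) (x : X) (n : N) :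
    tmul a (((1 : A) ⊗ₜ[K] b) • x) n = tmul a x ((b ⊗ₜ[K] (1 : A)) • n) :=
  congrArg (regularBimodule.mk a ⊗ₜ[A ⊗[K] A] ·)
    (BimoduleTensor.isBimodulePairing_tmul.map_smul_middle b x n)

lemma tmul_one_smul (a : A) (b : B) (x : X) (n : N) :
    tmul 1 x ((b ⊗ₜ[K] a) • n) = tmul 1 ((a ⊗ₜ[K] b) • x) n := calc
  tmul 1 x ((b ⊗ₜ[K] a) • n) = tmul 1 x (((1 : B) ⊗ₜ[K] a) • (b ⊗ₜ[K] (1 : A)) • n) := by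
    rw [smul_comm, tmul_one_smul_one_tmul_smul]
  _ = tmul 1 ((a ⊗ₜ[K] (1 : B)) • ((1 : A) ⊗ₜ[K] b) • x) n := by
    rw [tmul_smul_right, tmul_smul_left, tmul_smul_middle]
  _ = tmul 1 ((a ⊗ₜ[K] b) • x) n := by rw [tmul_one_smul_one_tmul_smul]

lemma tmul_add_left (a : A) (x x' : X) (n : N) : tmul a (x + x') n = tmul a x n + tmul a x' n :=
  (congrArg (regularBimodule.mk a ⊗ₜ[A ⊗[K] A] ·)
    (BimoduleTensor.isBimodulePairing_tmul.map_add_left x x' n)).trans (TensorProduct.tmul_add ..)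

lemma tmul_add_right (a : A) (x : X) (n n' : N) : tmul a x (n + n') = tmul a x n + tmul a x n' :=
  (congrArg (regularBimodule.mk a ⊗ₜ[A ⊗[K] A] ·)
    (BimoduleTensor.isBimodulePairing_tmul.map_add_right x n n')).trans (TensorProduct.tmul_add ..)

lemma addHom_ext {G : Type*} [AddCommGroup G] {f g : CyclicTensor X N →+ G}
    (h : ∀ a x n, f (tmul a x n) = g (tmul a x n)) : f = g :=
  addMonoidHom_ext_tmul fun a => DFunLike.congr_fun
    (BimoduleTensor.addHom_ext
      (f := f.comp (TensorProduct.mk (A ⊗[K] A) _ _ a).toAddMonoidHom)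
      (g := g.comp (TensorProduct.mk (A ⊗[K] A) _ _ a).toAddMonoidHom) (h a))

end CyclicTensor

/-- The tensor product `N ⊗_{A ⊗ B} X`, where the `B`-`A`-bimodule `N` is regarded as an
`A`-`B`-bimodule. As `A` acts in the same way through `N` and through `X`, this is also a
symmetric `A`-bimodule. -/
def SwapTensor (N : ModuleCat.{u} (B ⊗[K] A)) (X : ModuleCat.{u} (A ⊗[K] B)) : Type u :=
  swapFunctor.obj N ⊗[A ⊗[K] B] X

namespace SwapTensor

instance : AddCommGroup (SwapTensor N X) :=
  inferInstanceAs (AddCommGroup (swapFunctor.obj N ⊗[A ⊗[K] B] X))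

instance : Module (A ⊗[K] B) (SwapTensor N X) :=
  inferInstanceAs (Module (A ⊗[K] B) (swapFunctor.obj N ⊗[A ⊗[K] B] X))

instance : Module (A ⊗[K] A) (SwapTensor N X) :=
  .compHom _ ((algebraMap A (A ⊗[K] B)).comp (Algebra.TensorProduct.lmul' K (S := A)).toRingHom)

/-- The pure tensor `n ⊗ x`. -/
def tmul (n : N) (x : X) : SwapTensor N X := (show swapFunctor.obj N from n) ⊗ₜ[A ⊗[K] B] x

lemma smul_eq_algebraMap_smul (s : A ⊗[K] A) (t : SwapTensor N X) :
    s • t = algebraMap A (A ⊗[K] B) (Algebra.TensorProduct.lmul' K s) • t := rfl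

lemma tmul_smul (s : A ⊗[K] B) (n : N) (x : X) : tmul n (s • x) = s • tmul n x :=
  TensorProduct.tmul_smul s (show swapFunctor.obj N from n) x

lemma smul_tmul (a : A) (b : B) (n : N) (x : X) :
    tmul ((b ⊗ₜ[K] a) • n) x = tmul n ((a ⊗ₜ[K] b) • x) :=
  TensorProduct.smul_tmul (a ⊗ₜ[K] b) (show swapFunctor.obj N from n) x

lemma isBimodulePairing_tmul :
    IsBimodulePairing K A B A fun (x : X) (n : N) => tmul n x where
  map_add_left _ _ _ := TensorProduct.tmul_add ..
  map_add_right _ _ _ := TensorProduct.add_tmul ..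
  map_smul_left a x n := by
    rw [smul_eq_algebraMap_smul, Algebra.TensorProduct.lmul'_apply_tmul, mul_one, tmul_smul]
    rfl
  map_smul_right a x n := by
    rw [smul_eq_algebraMap_smul, Algebra.TensorProduct.lmul'_apply_tmul, one_mul, smul_tmul,
      tmul_smul]
    rfl
  map_smul_middle b x n := (smul_tmul 1 b n x).symm

end SwapTensor

/-- The map `a ⊗ (x ⊗ n) ↦ n ⊗ a x`. -/
def cyclicToSwap (N : ModuleCat.{u} (B ⊗[K] A)) (X : ModuleCat.{u} (A ⊗[K] B)) :
    CyclicTensor X N →+ SwapTensor N X :=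
  let τ : BimoduleTensor X N →ₗ[A ⊗[K] A] SwapTensor N X :=
    BimoduleTensor.lift SwapTensor.isBimodulePairing_tmul
  TensorProduct.liftAddHom
    (M := regularBimodule K A)
    (.mk' (fun a => .mk' (fun t => algebraMap A (A ⊗[K] B) a • τ t) fun t t' => by
        rw [map_add, smul_add])
      fun a a' => AddMonoidHom.ext fun t => (congrArg (· • τ t) (map_add _ a a')).trans
        (add_smul ..))
    fun s a t => calc
      algebraMap A (A ⊗[K] B) (Algebra.TensorProduct.lmul' K s * (show A from a)) • τ t =
          algebraMap A (A ⊗[K] B) a • s • τ t := by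
        rw [SwapTensor.smul_eq_algebraMap_smul, mul_comm, map_mul, mul_smul]
      _ = algebraMap A (A ⊗[K] B) a • τ (s • t) := by rw [map_smul]

lemma cyclicToSwap_tmul (a : A) (x : X) (n : N) :
    cyclicToSwap N X (CyclicTensor.tmul a x n) =
      SwapTensor.tmul n ((a ⊗ₜ[K] (1 : B)) • x) :=
  (SwapTensor.tmul_smul ..).symm

/-- The map `n ⊗ x ↦ 1 ⊗ (x ⊗ n)`. -/
def swapToCyclic (N : ModuleCat.{u} (B ⊗[K] A)) (X : ModuleCat.{u} (A ⊗[K] B)) :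
    SwapTensor N X →+ CyclicTensor X N :=
  let f : swapFunctor.obj N →+ X →+ CyclicTensor X N :=
    .mk' (fun n => .mk' (CyclicTensor.tmul 1 · n) fun x x' =>
        CyclicTensor.tmul_add_left 1 x x' n)
      fun n n' => AddMonoidHom.ext fun x => CyclicTensor.tmul_add_right 1 x n n'
  TensorProduct.liftAddHom f
    (map_smul_eq_of_tmul f fun a b n x => CyclicTensor.tmul_one_smul a b x n)

lemma swapToCyclic_tmul (n : N) (x : X) :
    swapToCyclic N X (SwapTensor.tmul n x) = CyclicTensor.tmul 1 x n := rfl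

/-- The isomorphism `N ⊗_{A ⊗ B} X ≃ A ⊗_{A ⊗ A} (X ⊗_B N)`: both sides are the quotient of
`X ⊗_K N` identifying the two actions of `A` and the two actions of `B`. -/
def swapTensorEquiv (N : ModuleCat.{u} (B ⊗[K] A)) (X : ModuleCat.{u} (A ⊗[K] B)) :
    SwapTensor N X ≃+ CyclicTensor X N :=
  (swapToCyclic N X).toAddEquiv (cyclicToSwap N X)
    (addMonoidHom_ext_tmul fun n x => (cyclicToSwap_tmul (N := N) 1 x n).trans
      (congrArg (SwapTensor.tmul (N := N) n) (one_smul (A ⊗[K] B) x)))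
    (CyclicTensor.addHom_ext fun a x n => by
      change swapToCyclic N X (cyclicToSwap N X (CyclicTensor.tmul a x n)) =
        CyclicTensor.tmul a x n
      rw [cyclicToSwap_tmul, swapToCyclic_tmul, CyclicTensor.tmul_smul_left, mul_one])

/-- `swapTensorEquiv`, as an isomorphism of functors of `X`. -/
def tensorLeftAbSwapIso (N : ModuleCat.{u} (B ⊗[K] A)) :
    tensorLeftAb (swapFunctor.obj N) ≅ tensorFunctor N ⋙ tensorLeftAb (regularBimodule K A) :=
  NatIso.ofComponents (fun X => (swapTensorEquiv N X).toAddCommGrpIso)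
    fun _ => tensorLeftAb_hom_ext fun _ _ => rfl

/-- The isomorphism `Tor_n^{A ⊗ B}(N, M) ≃ HH_n(A, M ⊗_B N)`. -/
def hochschildTensorEquiv (M : ModuleCat.{u} (A ⊗[K] B)) (N : ModuleCat.{u} (B ⊗[K] A))
    [Module.Flat B N] [Module.Projective A N] (n : ℕ) :
    ((Tor (ModuleCat.{u} (A ⊗[K] B)) n).obj (swapFunctor.obj N)).obj M ≃+
      hochschildHomology K A n ((tensorFunctor N).obj M) :=
  torEquivOfTensorLeftAbIso (tensorFunctor N) (tensorLeftAbSwapIso N) n M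

end Trace

section Swap

variable {M : ModuleCat.{u} (A ⊗[K] B)} {N : ModuleCat.{u} (B ⊗[K] C)}
  {P : ModuleCat.{u} (A ⊗[K] C)} {φ : M → N → P}

lemma IsBimodulePairing.swap (hφ : IsBimodulePairing K A B C φ) :
    IsBimodulePairing K C B A (M := swapFunctor.obj N) (N := swapFunctor.obj M)
      (P := swapFunctor.obj P) fun y x => φ x y where
  map_add_left y y' x := hφ.map_add_right x y y'
  map_add_right y x x' := hφ.map_add_left x x' y
  map_smul_left c y x := hφ.map_smul_right c x y
  map_smul_right a y x := hφ.map_smul_left a x y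
  map_smul_middle b y x := (hφ.map_smul_middle b x y).symm

lemma IsBimoduleTensor.swap (hφ : IsBimoduleTensor K A B C φ) :
    IsBimoduleTensor K C B A (M := swapFunctor.obj N) (N := swapFunctor.obj M)
      (P := swapFunctor.obj P) fun y x => φ x y where
  toIsBimodulePairing := hφ.toIsBimodulePairing.swap
  existsUnique_linearMap Q _ _ ψ hψ := by
    let Q' : ModuleCat (C ⊗[K] A) := .of _ Q
    have hψ' : IsBimodulePairing K A B C (M := M) (N := N) (P := swapFunctor.obj Q')
        fun x y => ψ y x :=
      ⟨fun x x' y => hψ.map_add_right y x x', fun x y y' => hψ.map_add_left y y' x,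
        fun a x y => hψ.map_smul_right a y x, fun c x y => hψ.map_smul_left c y x,
        fun b x y => (hψ.map_smul_middle b y x).symm⟩
    obtain ⟨g, hg, hg'⟩ := hφ.existsUnique_linearMap _ _ hψ'
    refine ⟨linearMapOfTMulSMul (M := swapFunctor.obj P) (P := Q) g.toAddMonoidHom
      fun c a z => g.map_smul (a ⊗ₜ[K] c) z, fun y x => hg x y, fun f hf => ?_⟩
    have := hg' (linearMapOfTMulSMul (M := P) (P := swapFunctor.obj Q') f.toAddMonoidHom
      fun a c z => f.map_smul (c ⊗ₜ[K] a) z) fun x y => hf y x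
    exact LinearMap.ext fun z => DFunLike.congr_fun this z

end Swap

/-- The regular bimodule is symmetric. -/
def regularBimoduleSwapIso : swapFunctor.obj (regularBimodule K A) ≅ regularBimodule K A :=
  (LinearEquiv.ofBijective
    (linearMapOfTMulSMul (M := swapFunctor.obj (regularBimodule K A)) (P := regularBimodule K A)
      (.id _) fun a b x => congrArg (· * (show A from x)) (calc
        Algebra.TensorProduct.lmul' K (b ⊗ₜ[K] a) = b * a :=
          Algebra.TensorProduct.lmul'_apply_tmul b a
        _ = a * b := mul_comm b a
        _ = Algebra.TensorProduct.lmul' K (a ⊗ₜ[K] b) :=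
          (Algebra.TensorProduct.lmul'_apply_tmul a b).symm))
    Function.bijective_id).toModuleIso

/-- Hochschild homology does not change when the two actions on the coefficients are exchanged. -/
def hochschildHomologySwapEquiv (n : ℕ) (P : ModuleCat.{u} (A ⊗[K] A)) :
    hochschildHomology K A n P ≃+ hochschildHomology K A n (swapFunctor.obj P) :=
  (torRestrictScalarsEquiv (Algebra.TensorProduct.comm K A A).toRingEquiv n _ P).trans
    (((Tor _ n).mapIso regularBimoduleSwapIso).app (swapFunctor.obj P)).toLinearEquiv.toAddEquiv

lemma IsBimoduleTensor.nonempty_tor_equiv {M : ModuleCat.{u} (A ⊗[K] B)}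
    {N : ModuleCat.{u} (B ⊗[K] A)} {P : ModuleCat.{u} (A ⊗[K] A)} {φ : M → N → P}
    (hφ : IsBimoduleTensor K A B A φ) (hNleft : Module.Flat B N)
    (hNright : Module.Projective A N) (n : ℕ) :
    Nonempty (((Tor (ModuleCat.{u} (A ⊗[K] B)) n).obj (swapFunctor.obj N)).obj M ≃+
      hochschildHomology K A n P) := by
  obtain ⟨e⟩ := BimoduleTensor.isBimoduleTensor_tmul.nonempty_linearEquiv hφ
  exact ⟨(hochschildTensorEquiv M N n).trans
    (((Tor _ n).obj (regularBimodule K A)).mapIso e.toModuleIso).toLinearEquiv.toAddEquiv⟩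

theorem hochschild_homology_trace_property_general {M : ModuleCat.{u} (A ⊗[K] B)}
    {N : ModuleCat.{u} (B ⊗[K] A)} (hNleft : Module.Projective B N)
    (hNright : Module.Projective A N) {P : ModuleCat.{u} (A ⊗[K] A)} {φ : M → N → P}
    (hφ : IsBimoduleTensor K A B A φ) {P' : ModuleCat.{u} (B ⊗[K] B)} {φ' : N → M → P'}
    (hφ' : IsBimoduleTensor K B A B φ') (n : ℕ) :
    Nonempty (hochschildHomology K A n P ≃+ hochschildHomology K B n P') := by
  obtain ⟨e⟩ := hφ.nonempty_tor_equiv Module.Flat.of_projective hNright n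
  obtain ⟨e'⟩ := IsBimoduleTensor.nonempty_tor_equiv (M := swapFunctor.obj M)
    (N := swapFunctor.obj N) (P := swapFunctor.obj P') hφ'.swap
    (Module.Flat.of_projective (R := A) (M := N)) hNleft n
  exact ⟨e.symm.trans ((torRestrictScalarsEquiv (Algebra.TensorProduct.comm K B A).toRingEquiv n
    (swapFunctor.obj N) M).trans (e'.trans (hochschildHomologySwapEquiv n P').symm))⟩

end Bimodule

end

/-- let `K` be a field of characteristic `0`, `R` a commutative
`K`-algebra, and `M`, `N` `R`-bimodules (modules over `S = R ⊗_K R`), each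
finitely generated projective as a left `R`-module (restriction along
`r ↦ r ⊗ 1`) and as a right `R`-module (restriction along `r ↦ 1 ⊗ r`).
Let `(P, φ)` be the bimodule tensor product `M ⊗_R N` — i.e. `φ : M → N → P` is
biadditive, compatible with the outer `S`-action, `R`-balanced
(`φ((1 ⊗ r) • x) y = φ x ((r ⊗ 1) • y)`) and universal among such pairings —
and let `(P', φ')` likewise be `N ⊗_R M`.  Then for every `n ≥ 0` there is an
isomorphism of Hochschild homology groups
`HH_n(R, M ⊗_R N) ≅ HH_n(R, N ⊗_R M)`, where
`HH_n(R, -) = Tor_n^{R ⊗_K R}(R, -)` and `R` is an `R ⊗_K R`-module via the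
multiplication map. -/
theorem hochschild_homology_trace_property
    (K : Type u) [Field K] [CharZero K]
    (R : Type u) [CommRing R] [Algebra K R]
    (M : Type u) [AddCommGroup M] [Module (TensorProduct K R R) M]
    (N : Type u) [AddCommGroup N] [Module (TensorProduct K R R) N]
    (hMleft :
      letI : Module R M := Module.compHom M (algebraMap R (TensorProduct K R R))
      Module.Finite R M ∧ Module.Projective R M)
    (hMright :
      letI : Module R M := Module.compHom M
        (Algebra.TensorProduct.includeRight (R := K) (A := R) (B := R)).toRingHom
      Module.Finite R M ∧ Module.Projective R M)
    (hNleft :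
      letI : Module R N := Module.compHom N (algebraMap R (TensorProduct K R R))
      Module.Finite R N ∧ Module.Projective R N)
    (hNright :
      letI : Module R N := Module.compHom N
        (Algebra.TensorProduct.includeRight (R := K) (A := R) (B := R)).toRingHom
      Module.Finite R N ∧ Module.Projective R N)
    -- `(P, φ)` is the bimodule tensor product `M ⊗_R N`:
    (P : Type u) [AddCommGroup P] [Module (TensorProduct K R R) P]
    (φ : M → N → P)
    (hφ₁ : ∀ x x' y, φ (x + x') y = φ x y + φ x' y)
    (hφ₂ : ∀ x y y', φ x (y + y') = φ x y + φ x y')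
    (hφ₃ : ∀ (r : R) x y, φ ((r ⊗ₜ[K] (1 : R)) • x) y = (r ⊗ₜ[K] (1 : R)) • φ x y)
    (hφ₄ : ∀ (r : R) x y, φ x (((1 : R) ⊗ₜ[K] r) • y) = ((1 : R) ⊗ₜ[K] r) • φ x y)
    (hφ₅ : ∀ (r : R) x y, φ (((1 : R) ⊗ₜ[K] r) • x) y = φ x ((r ⊗ₜ[K] (1 : R)) • y))
    (hφuniv : ∀ (Q : Type u) [AddCommGroup Q] [Module (TensorProduct K R R) Q]
      (ψ : M → N → Q),
      (∀ x x' y, ψ (x + x') y = ψ x y + ψ x' y) →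
      (∀ x y y', ψ x (y + y') = ψ x y + ψ x y') →
      (∀ (r : R) x y, ψ ((r ⊗ₜ[K] (1 : R)) • x) y = (r ⊗ₜ[K] (1 : R)) • ψ x y) →
      (∀ (r : R) x y, ψ x (((1 : R) ⊗ₜ[K] r) • y) = ((1 : R) ⊗ₜ[K] r) • ψ x y) →
      (∀ (r : R) x y, ψ (((1 : R) ⊗ₜ[K] r) • x) y = ψ x ((r ⊗ₜ[K] (1 : R)) • y)) →
      ∃! g : P →ₗ[TensorProduct K R R] Q, ∀ x y, g (φ x y) = ψ x y)
    -- `(P', φ')` is the bimodule tensor product `N ⊗_R M`: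
    (P' : Type u) [AddCommGroup P'] [Module (TensorProduct K R R) P']
    (φ' : N → M → P')
    (hφ'₁ : ∀ y y' x, φ' (y + y') x = φ' y x + φ' y' x)
    (hφ'₂ : ∀ y x x', φ' y (x + x') = φ' y x + φ' y x')
    (hφ'₃ : ∀ (r : R) y x, φ' ((r ⊗ₜ[K] (1 : R)) • y) x = (r ⊗ₜ[K] (1 : R)) • φ' y x)
    (hφ'₄ : ∀ (r : R) y x, φ' y (((1 : R) ⊗ₜ[K] r) • x) = ((1 : R) ⊗ₜ[K] r) • φ' y x)
    (hφ'₅ : ∀ (r : R) y x, φ' (((1 : R) ⊗ₜ[K] r) • y) x = φ' y ((r ⊗ₜ[K] (1 : R)) • x))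
    (hφ'univ : ∀ (Q : Type u) [AddCommGroup Q] [Module (TensorProduct K R R) Q]
      (ψ : N → M → Q),
      (∀ y y' x, ψ (y + y') x = ψ y x + ψ y' x) →
      (∀ y x x', ψ y (x + x') = ψ y x + ψ y x') →
      (∀ (r : R) y x, ψ ((r ⊗ₜ[K] (1 : R)) • y) x = (r ⊗ₜ[K] (1 : R)) • ψ y x) →
      (∀ (r : R) y x, ψ y (((1 : R) ⊗ₜ[K] r) • x) = ((1 : R) ⊗ₜ[K] r) • ψ y x) →
      (∀ (r : R) y x, ψ (((1 : R) ⊗ₜ[K] r) • y) x = ψ y ((r ⊗ₜ[K] (1 : R)) • x)) →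
      ∃! g : P' →ₗ[TensorProduct K R R] Q, ∀ y x, g (φ' y x) = ψ y x)
    (n : ℕ) :
    letI : Module (TensorProduct K R R) R :=
      (Algebra.TensorProduct.lmul' K (S := R)).toRingHom.toModule
    Nonempty
      (↥(((Tor (ModuleCat (TensorProduct K R R)) n).obj
            (ModuleCat.of (TensorProduct K R R) R)).obj
          (ModuleCat.of (TensorProduct K R R) P)) ≃+
        ↥(((Tor (ModuleCat (TensorProduct K R R)) n).obj
            (ModuleCat.of (TensorProduct K R R) R)).obj
          (ModuleCat.of (TensorProduct K R R) P'))) := by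
  exact hochschild_homology_trace_property_general
    (M := .of _ M) (N := .of _ N) (P := .of _ P) (P' := .of _ P') hNleft.2 hNright.2
    ⟨⟨hφ₁, hφ₂, hφ₃, hφ₄, hφ₅⟩, fun Q _ _ ψ h => hφuniv Q ψ h.1 h.2 h.3 h.4 h.5⟩
    ⟨⟨hφ'₁, hφ'₂, hφ'₃, hφ'₄, hφ'₅⟩, fun Q _ _ ψ h => hφ'univ Q ψ h.1 h.2 h.3 h.4 h.5⟩ n
end
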